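/- Let 0 < h_1 < … < h_n < 1 be reals, let P be an invertible real n×n matrix whose columns have unit Euclidean norm, let j_1 ≤ j_2 be integers with m := j_2 − j_1 + 1, and let w_{j_1}, …, w_{j_2} be real weights with Σ_j w_j = 0 and Σ_j j·w_j = 1. Let B be a real symmetric positive definite n×n matrix and set B(j) := diag(2^{j h_1}, …, 2^{j h_n}) · B · diag(2^{j h_1}, …, 2^{j h_n}). Let ν → ∞ and let a_ν be positive reals satisfying a_ν/ν → 0 and ν/a_ν^{1+2γ} → 0, where γ := min_{1 ≤ q_1 < q_2 ≤ n}(h_{q_2} − h_{q_1}); set K_{ν,j} := ν/(a_ν 2^j). For each j let B̂_ν(j) be random real symmetric almost surely positive definite matrices such that the stacked vector (√K_{ν,j} · vec_S(B̂_ν(j) − B(j)))_{j=j_1,…,j_2} converges in distribution to a centered Gaussian distribution on ℝ^{m·n(n+1)/2} with positive definite covariance. Set W_ν(j) := P D_{a_ν} B̂_ν(j) D_{a_ν} Pᵀ and define ĥ_q := (1/2) Σ_{j=j_1}^{j_2} w_j log₂ λ_q(W_ν(j)). Then the ℝⁿ-valued random vector √(ν/a_ν) · (ĥ_q − h_q)_{q=1,…,n}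 converges in distribution, as ν → ∞, to a centered n-variate Gaussian distribution. -/

import Mathlib

/-!
Write `M = V Vᵀ` with `V` upper triangular with positive diagonal, so that the squares of the diagonal
entries of `V` are the pivots of `M` (ratios of final principal minors, smooth in `M`). Since
`A Aᵀ` and `Aᵀ A` have the same eigenvalues, those of `P D_a M D_a Pᵀ` are the eigenvalues of
`D_a (Kᵀ PᵀP K) D_a`, where `K = D_a V D_a⁻¹`. As `h` is increasing with gaps at least `γ`, the
off-diagonal entries of `K` are `O(a^{-γ})`. Using this contraction twice, the second time for the
Cholesky factor of `Kᵀ PᵀP K`, together with Courant–Fischer, gives (`isBigO_log_eigR`)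

  `log λ_q(P D_a M D_a Pᵀ) = 2 h_q log a + log pivot_q(M) + log pivot_q(PᵀP) + O(a^{-γ})`,

along any filter on which `M` converges to a positive definite matrix.

Multiplied by `√(ν/a)` the error is `√(ν/a^{1+2γ}) → 0`, so to first order the log-eigenvalues move
like the log-pivots of `B̂(j)` around `B(j)` (`tendsto_log_eigR`). Since
`log pivot_q(B(j)) = 2 j h_q log 2 + log pivot_q(B)`, the conditions `Σ w_j = 0` and `Σ j w_j = 1`
cancel everything but `h_q` (`regression_identity`). Thus the rescaled estimator is a deterministic
function `g_ν` of the stacked vector of sample wavelet variances, and `g_ν(z_ν) → L z` whenever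
`z_ν → z`, with `L` linear. The extended continuous mapping theorem (`tendstoInDistribution_comp`)
gives convergence to the image of the Gaussian under `L`, which is centered Gaussian
(`isCenteredGaussian_map`).
-/

open Matrix MeasureTheory Filter Topology

/-- The `q`-th smallest eigenvalue (`q` 0-indexed) of a real symmetric matrix. -/
noncomputable def eigR {n : ℕ} (M : Matrix (Fin n) (Fin n) ℝ) (q : Fin n) : ℝ :=
  if h : M.IsHermitian then (h.eigenvalues ∘ Tuple.sort h.eigenvalues) q else 0

/-- `D_a := diag(a^{h_1},…,a^{h_n})`. -/
noncomputable def Dmat {n : ℕ} (h : Fin n → ℝ) (a : ℝ) : Matrix (Fin n) (Fin n) ℝ :=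
  Matrix.diagonal fun i => a ^ h i

/-- `diag(2^{j h_1},…,2^{j h_n})`. -/
noncomputable def Emat {n : ℕ} (h : Fin n → ℝ) (j : ℤ) : Matrix (Fin n) (Fin n) ℝ :=
  Matrix.diagonal fun i => (2 : ℝ) ^ ((j : ℝ) * h i)

/-- A measure on `ι → ℝ` is a centered Gaussian with covariance matrix `C` iff it is a
probability measure all of whose one-dimensional linear marginals are centered real Gaussians
with the appropriate variances. -/
def IsCenteredGaussian {ι : Type*} [Fintype ι] (μG : Measure (ι → ℝ))
    (C : Matrix ι ι ℝ) : Prop :=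
  IsProbabilityMeasure μG ∧ ∀ c : ι → ℝ,
    μG.map (fun x => ∑ i, c i * x i) =
      ProbabilityTheory.gaussianReal 0 (∑ i, ∑ j, c i * C i j * c j).toNNReal

/-- Convergence in distribution (weak convergence of laws) of a sequence of random vectors. -/
def TendstoInDistribution {Ω : Type*} [MeasurableSpace Ω] (μ : Measure Ω) {E : Type*}
    [TopologicalSpace E] [MeasurableSpace E] (X : ℕ → Ω → E) (μE : Measure E) : Prop :=
  ∀ f : BoundedContinuousFunction E ℝ,
    Tendsto (fun k => ∫ ω, f (X k ω) ∂μ) atTop (𝓝 (∫ x, f x ∂μE))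

/-! ### Sorted eigenvalues -/

theorem eigR_of_herm {n : ℕ} {M : Matrix (Fin n) (Fin n) ℝ} (hM : M.IsHermitian) (q : Fin n) :
    eigR M q = (hM.eigenvalues ∘ Tuple.sort hM.eigenvalues) q := by
  rw [eigR, dif_pos hM]

theorem eigR_mono {n : ℕ} (M : Matrix (Fin n) (Fin n) ℝ) : Monotone (eigR M) := by
  intro i j hij
  by_cases hM : M.IsHermitian
  · rw [eigR_of_herm hM, eigR_of_herm hM]
    exact Tuple.monotone_sort hM.eigenvalues hij
  · rw [eigR, eigR, dif_neg hM, dif_neg hM]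

theorem eigR_congr {n : ℕ} {M N : Matrix (Fin n) (Fin n) ℝ} (hM : M.IsHermitian)
    (hN : N.IsHermitian) (h : M.charpoly = N.charpoly) : eigR M = eigR N := by
  funext q
  rw [eigR_of_herm hM, eigR_of_herm hN, (Matrix.IsHermitian.eigenvalues_eq_eigenvalues_iff hM hN).2 h]

/-- `A Aᵀ` and `Aᵀ A` have the same characteristic polynomial, hence the same sorted eigenvalues. -/
theorem eigR_swap {n : ℕ} (A : Matrix (Fin n) (Fin n) ℝ) : eigR (A * Aᵀ) = eigR (Aᵀ * A) := by
  refine eigR_congr ?_ ?_ (Matrix.charpoly_mul_comm _ _)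
  · simpa using Matrix.isHermitian_mul_conjTranspose_self A
  · simpa using Matrix.isHermitian_conjTranspose_mul_self A

/-- Spectral theorem in quadratic-form language: the `v i` are an orthonormal eigenbasis listed in
increasing order of the eigenvalues. -/
theorem exists_spectral {n : ℕ} {M : Matrix (Fin n) (Fin n) ℝ} (hM : M.IsHermitian) :
    ∃ v : Fin n → Fin n → ℝ,
      (∀ x : Fin n → ℝ, x ⬝ᵥ (M *ᵥ x) = ∑ i, eigR M i * (v i ⬝ᵥ x) ^ 2) ∧
      (∀ x : Fin n → ℝ, x ⬝ᵥ x = ∑ i, (v i ⬝ᵥ x) ^ 2) := by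
  set U : Matrix (Fin n) (Fin n) ℝ := (hM.eigenvectorUnitary : Matrix (Fin n) (Fin n) ℝ) with hU
  have hUU : U * Uᵀ = 1 := by
    have := hM.eigenvectorUnitary.2
    rw [Matrix.mem_unitaryGroup_iff] at this
    simpa [Matrix.star_eq_conjTranspose] using this
  have hsp : M = U * Matrix.diagonal hM.eigenvalues * Uᵀ := by
    have := hM.spectral_theorem
    rw [Unitary.conjStarAlgAut_apply] at this
    simpa [Matrix.star_eq_conjTranspose, Function.comp_def] using this
  have hvx : ∀ (x : Fin n → ℝ) i, (fun k => U k i) ⬝ᵥ x = (Uᵀ *ᵥ x) i := fun x i => rfl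
  refine ⟨fun i k => U k (Tuple.sort hM.eigenvalues i), fun x => ?_, fun x => ?_⟩
  · have h1 : x ⬝ᵥ (M *ᵥ x) = ∑ i, hM.eigenvalues i * ((Uᵀ *ᵥ x) i) ^ 2 := by
      conv_lhs => rw [hsp]
      rw [← Matrix.mulVec_mulVec, ← Matrix.mulVec_mulVec, Matrix.dotProduct_mulVec,
        ← Matrix.mulVec_transpose, dotProduct]
      refine Finset.sum_congr rfl fun i _ => ?_
      rw [Matrix.mulVec_diagonal]; ring
    rw [h1, ← Equiv.sum_comp (Tuple.sort hM.eigenvalues)]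
    refine Finset.sum_congr rfl fun i _ => ?_
    rw [hvx, eigR_of_herm hM]; rfl
  · have h1 : x ⬝ᵥ x = ∑ i, ((Uᵀ *ᵥ x) i) ^ 2 := by
      have : x ⬝ᵥ x = x ⬝ᵥ ((U * Uᵀ) *ᵥ x) := by rw [hUU, Matrix.one_mulVec]
      rw [this, ← Matrix.mulVec_mulVec, Matrix.dotProduct_mulVec,
        ← Matrix.mulVec_transpose, dotProduct]
      exact Finset.sum_congr rfl fun i _ => (sq _).symm
    rw [h1, ← Equiv.sum_comp (Tuple.sort hM.eigenvalues)]
    exact Finset.sum_congr rfl fun i _ => by rw [hvx]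

/-- `n - 1` linear constraints on `ℝⁿ` have a nonzero common solution. -/
theorem exists_ne_zero_constraints {n : ℕ} (q : Fin n) (c : Fin n → Fin n → ℝ) :
    ∃ x : Fin n → ℝ, x ≠ 0 ∧ ∀ i, i ≠ q → c i ⬝ᵥ x = 0 := by
  let f : (Fin n → ℝ) →ₗ[ℝ] ({i : Fin n // i ≠ q} → ℝ) :=
    Matrix.mulVecLin (Matrix.of fun (i : {i : Fin n // i ≠ q}) k => c i.1 k)
  have hlt : Module.finrank ℝ ({i : Fin n // i ≠ q} → ℝ) < Module.finrank ℝ (Fin n → ℝ) := by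
    rw [Module.finrank_pi, Module.finrank_pi]
    exact Fintype.card_subtype_lt (x := q) (by simp)
  obtain ⟨x, hx, hx0⟩ := (Submodule.ne_bot_iff _).1 (LinearMap.ker_ne_bot_of_finrank_lt (f := f) hlt)
  exact ⟨x, hx0, fun i hi => congrFun (LinearMap.mem_ker.1 hx) ⟨i, hi⟩⟩

theorem dotProduct_self_pos' {n : ℕ} {x : Fin n → ℝ} (hx : x ≠ 0) : 0 < x ⬝ᵥ x := by
  have h1 : 0 ≤ x ⬝ᵥ x := Finset.sum_nonneg fun i _ => mul_self_nonneg _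
  refine lt_of_le_of_ne h1 fun h => hx (dotProduct_self_eq_zero.1 h.symm)

/-- Courant–Fischer, upper half: a quadratic-form bound on a subspace cut out by the constraints
`u i ⬝ᵥ x = 0`, `i > q`, bounds the `q`-th eigenvalue from above. -/
theorem eigR_le {n : ℕ} {M : Matrix (Fin n) (Fin n) ℝ} (hM : M.IsHermitian) (q : Fin n) (t : ℝ)
    (u : Fin n → Fin n → ℝ)
    (H : ∀ x : Fin n → ℝ, (∀ i, q < i → u i ⬝ᵥ x = 0) → x ⬝ᵥ (M *ᵥ x) ≤ t * (x ⬝ᵥ x)) :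
    eigR M q ≤ t := by
  obtain ⟨v, hv1, hv2⟩ := exists_spectral hM
  obtain ⟨x, hx0, hx⟩ := exists_ne_zero_constraints q (fun i => if q < i then u i else v i)
  have h1 := H x fun i hi => by simpa [hi] using hx i hi.ne'
  have h2 : eigR M q * (x ⬝ᵥ x) ≤ x ⬝ᵥ (M *ᵥ x) := by
    rw [hv1, hv2, Finset.mul_sum]
    refine Finset.sum_le_sum fun i _ => ?_
    rcases lt_or_ge i q with hi | hi
    · have := hx i hi.ne
      rw [if_neg hi.not_gt] at this
      simp [this]
    · exact mul_le_mul_of_nonneg_right (eigR_mono M hi) (sq_nonneg _)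
  exact le_of_mul_le_mul_right (h2.trans h1) (dotProduct_self_pos' hx0)

/-- Courant–Fischer, lower half, with constraints indexed by `i < q`. -/
theorem le_eigR {n : ℕ} {M : Matrix (Fin n) (Fin n) ℝ} (hM : M.IsHermitian) (q : Fin n) (t : ℝ)
    (u : Fin n → Fin n → ℝ)
    (H : ∀ x : Fin n → ℝ, (∀ i, i < q → u i ⬝ᵥ x = 0) → t * (x ⬝ᵥ x) ≤ x ⬝ᵥ (M *ᵥ x)) :
    t ≤ eigR M q := by
  obtain ⟨v, hv1, hv2⟩ := exists_spectral hM
  obtain ⟨x, hx0, hx⟩ := exists_ne_zero_constraints q (fun i => if i < q then u i else v i)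
  have h1 := H x fun i hi => by simpa [hi] using hx i hi.ne
  have h2 : x ⬝ᵥ (M *ᵥ x) ≤ eigR M q * (x ⬝ᵥ x) := by
    rw [hv1, hv2, Finset.mul_sum]
    refine Finset.sum_le_sum fun i _ => ?_
    rcases lt_or_ge q i with hi | hi
    · have := hx i hi.ne'
      rw [if_neg hi.not_gt] at this
      simp [this]
    · exact mul_le_mul_of_nonneg_right (eigR_mono M hi) (sq_nonneg _)
  exact le_of_mul_le_mul_right (h1.trans h2) (dotProduct_self_pos' hx0)

/-- Entrywise bound for the quadratic form of a matrix. -/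
theorem abs_quad_le {n : ℕ} (A : Matrix (Fin n) (Fin n) ℝ) (x : Fin n → ℝ) :
    |x ⬝ᵥ (A *ᵥ x)| ≤ (∑ i, ∑ k, |A i k|) * (x ⬝ᵥ x) := by
  have h1 : x ⬝ᵥ (A *ᵥ x) = ∑ i, ∑ k, A i k * (x i * x k) := by
    simp only [dotProduct, mulVec, Finset.mul_sum]
    exact Finset.sum_congr rfl fun i _ => Finset.sum_congr rfl fun k _ => by ring
  have hs : ∀ i, x i ^ 2 ≤ x ⬝ᵥ x := fun i => by
    rw [sq]
    exact Finset.single_le_sum (f := fun i => x i * x i) (fun i _ => mul_self_nonneg _)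
      (Finset.mem_univ i)
  rw [h1, Finset.sum_mul]
  refine (Finset.abs_sum_le_sum_abs _ _).trans (Finset.sum_le_sum fun i _ => ?_)
  rw [Finset.sum_mul]
  refine (Finset.abs_sum_le_sum_abs _ _).trans (Finset.sum_le_sum fun k _ => ?_)
  rw [abs_mul]
  refine mul_le_mul_of_nonneg_left ?_ (abs_nonneg _)
  rw [abs_le]
  constructor <;> nlinarith [hs i, hs k, sq_nonneg (x i + x k), sq_nonneg (x i - x k)]

/-- One half of Weyl's perturbation inequality. -/
theorem eigR_le_add {n : ℕ} {M N : Matrix (Fin n) (Fin n) ℝ} (hM : M.IsHermitian)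
    (hN : N.IsHermitian) (q : Fin n) :
    eigR M q ≤ eigR N q + ∑ i, ∑ k, |M i k - N i k| := by
  obtain ⟨v, hv1, hv2⟩ := exists_spectral hN
  refine eigR_le hM q _ v fun x hx => ?_
  have h1 : x ⬝ᵥ (N *ᵥ x) ≤ eigR N q * (x ⬝ᵥ x) := by
    rw [hv1, hv2, Finset.mul_sum]
    refine Finset.sum_le_sum fun i _ => ?_
    rcases lt_or_ge q i with hi | hi
    · simp [hx i hi]
    · exact mul_le_mul_of_nonneg_right (eigR_mono N hi) (sq_nonneg _)
  have h2 := (abs_le.1 (abs_quad_le (M - N) x)).2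
  rw [Matrix.sub_mulVec, dotProduct_sub] at h2
  simp only [Matrix.sub_apply] at h2
  linarith

/-- By Weyl's inequality the sorted eigenvalues depend continuously on the symmetrised matrix.
Symmetrising first matters because `eigR` has the junk value `0` off the symmetric matrices. -/
theorem measurable_eigR {n : ℕ} {α : Type*} [MeasurableSpace α] (M : α → Matrix (Fin n) (Fin n) ℝ)
    (hM : ∀ i k, Measurable fun ω => M ω i k) (hs : ∀ ω, (M ω).IsHermitian) (q : Fin n) :
    Measurable fun ω => eigR (M ω) q := by
  let S : (Fin n → Fin n → ℝ) → Matrix (Fin n) (Fin n) ℝ :=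
    fun f => Matrix.of fun i k => (f i k + f k i) / 2
  have hS : ∀ f, (S f).IsHermitian := fun f => by
    ext i k; simp [S, add_comm]
  have hcont : Continuous fun f => eigR (S f) q := by
    rw [continuous_iff_continuousAt]
    intro f
    have hd : Tendsto (fun g => ∑ i, ∑ k, |S g i k - S f i k|) (𝓝 f) (𝓝 0) := by
      have hc : Continuous (fun g => ∑ i, ∑ k, |S g i k - S f i k|) := by
        simp only [S, Matrix.of_apply]; fun_prop
      simpa using hc.tendsto f
    rw [ContinuousAt, tendsto_iff_dist_tendsto_zero]
    refine squeeze_zero (fun _ => dist_nonneg) (fun g => ?_) hd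
    rw [Real.dist_eq, abs_le]
    have h1 := eigR_le_add (hS g) (hS f) q
    have h2 := eigR_le_add (hS f) (hS g) q
    simp only [abs_sub_comm (S f _ _)] at h2
    constructor <;> linarith
  have h3 : (fun ω => eigR (M ω) q) = (fun f => eigR (S f) q) ∘ fun ω i k => M ω i k := by
    funext ω
    have : S (fun i k => M ω i k) = M ω := by
      ext i k
      have := (hs ω).apply i k
      simp only [star_trivial] at this
      simp [S, this]
    simp only [Function.comp, this]
  rw [h3]
  exact hcont.measurable.comp (measurable_pi_lambda _ fun i => measurable_pi_lambda _ fun k => hM i k)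

/-! ### Cholesky factors and pivots -/

/-- The `q`-th pivot of the `V Vᵀ` (upper triangular `V`) factorisation of `M`: the ratio of the
lower-right principal minors with index sets `{i | q ≤ i}` and `{i | q < i}`. -/
noncomputable def pivot {n : ℕ} (M : Matrix (Fin n) (Fin n) ℝ) (q : Fin n) : ℝ :=
  (M.toBlock (fun i => q ≤ i) (fun i => q ≤ i)).det /
    (M.toBlock (fun i => q < i) (fun i => q < i)).det

/-- `V` is an upper triangular matrix with positive diagonal. -/
def UpperPos {n : ℕ} (V : Matrix (Fin n) (Fin n) ℝ) : Prop :=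
  (∀ i k, k < i → V i k = 0) ∧ ∀ i, 0 < V i i

/-- For an upper triangular factor `V`, the principal minors of `V Vᵀ` on final segments of the index
set are products of squared diagonal entries of `V`. -/
theorem det_toBlock_chol {n : ℕ} {V : Matrix (Fin n) (Fin n) ℝ} (hV : UpperPos V)
    (p : Fin n → Prop) [DecidablePred p] (hp : ∀ i k, p i → i ≤ k → p k) :
    ((V * Vᵀ).toBlock p p).det = ∏ i : {i // p i}, V i.1 i.1 ^ 2 := by
  have h0 : V.toBlock p (fun i => ¬ p i) = 0 := by
    ext i k
    simp only [toBlock_apply, Matrix.zero_apply]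
    refine hV.1 _ _ (lt_of_not_ge fun h => k.2 (hp _ _ i.2 h))
  have h1 : (V * Vᵀ).toBlock p p = V.toBlock p p * (V.toBlock p p)ᵀ := by
    rw [Matrix.toBlock_mul_eq_add p p p, h0, Matrix.zero_mul, add_zero]
    rfl
  have h2 : (V.toBlock p p).det = ∏ i : {i // p i}, V i.1 i.1 := by
    rw [Matrix.det_of_isUpperTriangular]
    · rfl
    · intro i k hik
      exact hV.1 _ _ hik
  rw [h1, det_mul, det_transpose, h2, ← Finset.prod_mul_distrib]
  exact Finset.prod_congr rfl fun i _ => (sq _).symm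

theorem det_toBlock_chol_pos {n : ℕ} {V : Matrix (Fin n) (Fin n) ℝ} (hV : UpperPos V)
    (p : Fin n → Prop) [DecidablePred p] (hp : ∀ i k, p i → i ≤ k → p k) :
    0 < ((V * Vᵀ).toBlock p p).det := by
  rw [det_toBlock_chol hV p hp]
  exact Finset.prod_pos fun i _ => pow_pos (hV.2 _) 2

theorem pivot_chol {n : ℕ} {V : Matrix (Fin n) (Fin n) ℝ} (hV : UpperPos V) (q : Fin n) :
    pivot (V * Vᵀ) q = V q q ^ 2 := by
  have h1 := det_toBlock_chol_pos hV (fun i => q < i) fun i k h1 h2 => lt_of_lt_of_le h1 h2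
  rw [pivot, div_eq_iff h1.ne', det_toBlock_chol hV _ fun i k h1 h2 => le_trans h1 h2,
    det_toBlock_chol hV _ fun i k h1 h2 => lt_of_lt_of_le h1 h2]
  rw [← Finset.prod_subtype (Finset.Ici q) (by simp) (fun i => V i i ^ 2),
    ← Finset.prod_subtype (Finset.Ioi q) (by simp) (fun i => V i i ^ 2),
    ← Finset.Ioi_insert, Finset.prod_insert (by simp)]

/-- Cholesky factorisation with an upper triangular left factor. -/
theorem exists_chol {n : ℕ} {M : Matrix (Fin n) (Fin n) ℝ} (hM : M.PosDef) :
    ∃ V, UpperPos V ∧ V * Vᵀ = M := by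
  -- The lower triangular `X` diagonalising `M⁻¹` gives `M = Xᵀ d⁻¹ X`, and `Xᵀ` is upper
  -- triangular.
  have hS : (M⁻¹).PosDef := hM.inv
  let X : Matrix (Fin n) (Fin n) ℝ := LDL.lowerInv hS
  have hX0 : ∀ i k : Fin n, i < k → X i k = 0 := fun i k hik => LDL.lowerInv_triangular hS hik
  let d : Fin n → ℝ := LDL.diagEntries hS
  have hXinv : Invertible X := LDL.invertibleLowerInv hS
  have hXd : X * M⁻¹ * Xᵀ = Matrix.diagonal d := by
    have := (LDL.diag_eq_lowerInv_conj hS).symm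
    rw [Matrix.conjTranspose_eq_transpose_of_trivial] at this
    exact this
  have hXdet : IsUnit X.det := (Matrix.isUnit_iff_isUnit_det X).1 (isUnit_of_invertible X)
  have hd : ∀ i, 0 < d i := by
    have h1 : (X * M⁻¹ * Xᵀ).PosDef := by
      have := hS.mul_mul_conjTranspose_same (B := X)
        (Matrix.vecMul_injective_of_isUnit (isUnit_of_invertible X))
      simpa using this
    rw [hXd] at h1
    exact Matrix.posDef_diagonal_iff.1 h1
  have hXdiag : ∀ i, X i i ≠ 0 := by
    have h1 : (Xᵀ).det ≠ 0 := by rw [Matrix.det_transpose]; exact hXdet.ne_zero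
    rw [Matrix.det_of_isUpperTriangular (M := Xᵀ) (fun i k h => hX0 k i h)] at h1
    intro i hi
    exact h1 (Finset.prod_eq_zero (Finset.mem_univ i) hi)
  have hM2 : M = Xᵀ * Matrix.diagonal (fun i => (d i)⁻¹) * X := by
    have hT : IsUnit (Xᵀ).det := by rwa [Matrix.det_transpose]
    have hMdet : IsUnit M.det := (Matrix.isUnit_iff_isUnit_det M).1 hM.isUnit
    have h1 : Matrix.diagonal (fun i => (d i)⁻¹) = (Xᵀ)⁻¹ * M * X⁻¹ := by
      have h2 : (Matrix.diagonal d)⁻¹ = Matrix.diagonal (fun i => (d i)⁻¹) := by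
        refine Matrix.inv_eq_right_inv ?_
        rw [Matrix.diagonal_mul_diagonal, ← Matrix.diagonal_one]
        congr 1; funext i; exact mul_inv_cancel₀ (hd i).ne'
      rw [← h2, ← hXd, Matrix.mul_inv_rev, Matrix.mul_inv_rev,
        Matrix.nonsing_inv_nonsing_inv _ hMdet, Matrix.mul_assoc]
    rw [h1, ← Matrix.mul_assoc, ← Matrix.mul_assoc, Matrix.mul_nonsing_inv _ hT, Matrix.one_mul,
      Matrix.mul_assoc, Matrix.nonsing_inv_mul _ hXdet, Matrix.mul_one]
  -- The sign in `s` makes the diagonal of the factor positive.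
  let s : Fin n → ℝ := fun k => SignType.sign (X k k) * √((d k)⁻¹)
  have hs : ∀ k, s k * s k = (d k)⁻¹ := fun k => by
    have h1 : √((d k)⁻¹) * √((d k)⁻¹) = (d k)⁻¹ := Real.mul_self_sqrt (inv_pos.2 (hd k)).le
    rcases lt_or_gt_of_ne (hXdiag k) with h | h
    · simp only [s, sign_neg h, SignType.coe_neg_one]; linarith
    · simp only [s, sign_pos h, SignType.coe_one]; linarith
  refine ⟨Xᵀ * Matrix.diagonal s, ⟨fun i k hik => ?_, fun i => ?_⟩, ?_⟩
  · rw [Matrix.mul_diagonal, Matrix.transpose_apply, hX0 k i hik, zero_mul]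
  · rw [Matrix.mul_diagonal, Matrix.transpose_apply]
    have h2 : 0 < √((d i)⁻¹) := Real.sqrt_pos.2 (inv_pos.2 (hd i))
    rcases lt_or_gt_of_ne (hXdiag i) with h | h
    · simp only [s, sign_neg h, SignType.coe_neg_one]; nlinarith
    · simp only [s, sign_pos h, SignType.coe_one]; nlinarith
  · rw [Matrix.transpose_mul, Matrix.diagonal_transpose, Matrix.mul_assoc,
      ← Matrix.mul_assoc (Matrix.diagonal s), Matrix.diagonal_mul_diagonal]
    simp only [hs]
    rw [← Matrix.mul_assoc, Matrix.transpose_transpose]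
    exact hM2.symm

theorem pivot_pos {n : ℕ} {M : Matrix (Fin n) (Fin n) ℝ} (hM : M.PosDef) (q : Fin n) :
    0 < pivot M q := by
  obtain ⟨V, hV, rfl⟩ := exists_chol hM
  rw [pivot_chol hV]
  exact pow_pos (hV.2 q) 2

/-- Congruence by a positive diagonal matrix scales the pivots by the squared entries. -/
theorem pivot_diagonal {n : ℕ} {M : Matrix (Fin n) (Fin n) ℝ} (hM : M.PosDef) {e : Fin n → ℝ}
    (he : ∀ i, 0 < e i) (q : Fin n) :
    pivot (diagonal e * M * diagonal e) q = e q ^ 2 * pivot M q := by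
  obtain ⟨V, hV, rfl⟩ := exists_chol hM
  have hV' : UpperPos (diagonal e * V) :=
    ⟨fun i k hik => by rw [diagonal_mul, hV.1 i k hik, mul_zero],
      fun i => by rw [diagonal_mul]; exact mul_pos (he i) (hV.2 i)⟩
  have : diagonal e * (V * Vᵀ) * diagonal e = (diagonal e * V) * (diagonal e * V)ᵀ := by
    rw [transpose_mul, diagonal_transpose]; simp only [Matrix.mul_assoc]
  rw [this, pivot_chol hV', pivot_chol hV, diagonal_mul, mul_pow]

theorem posDef_diagonal_conj {n : ℕ} {M : Matrix (Fin n) (Fin n) ℝ} (hM : M.PosDef) {e : Fin n → ℝ}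
    (he : ∀ i, 0 < e i) : (diagonal e * M * diagonal e).PosDef := by
  have := hM.mul_mul_conjTranspose_same (B := diagonal e)
        (Matrix.vecMul_injective_of_isUnit (Matrix.isUnit_diagonal.2 (by
          rw [Pi.isUnit_iff]; exact fun i => (he i).ne'.isUnit)))
  simpa using this

section Smooth

attribute [local instance] Matrix.normedAddCommGroup Matrix.normedSpace

/-- Pivots are ratios of minors, hence rational functions of the entries; the denominator does not
vanish at a positive definite matrix. -/
theorem contDiffAt_log_pivot {n : ℕ} {M : Matrix (Fin n) (Fin n) ℝ} (hM : M.PosDef) (q : Fin n) :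
    ContDiffAt ℝ 1 (fun A : Matrix (Fin n) (Fin n) ℝ => Real.log (pivot A q)) M := by
  have hdet : ∀ (p : Fin n → Prop) [DecidablePred p],
      ContDiff ℝ 1 (fun A : Matrix (Fin n) (Fin n) ℝ => (A.toBlock p p).det) := by
    intro p _
    simp only [Matrix.det_apply, toBlock_apply]
    refine ContDiff.sum fun σ _ => ContDiff.const_smul _ (contDiff_prod fun i _ => ?_)
    exact (contDiff_apply_apply ℝ ℝ (σ i).1 i.1 : _)
  have hpos : (M.toBlock (fun i => q < i) (fun i => q < i)).det ≠ 0 := by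
    obtain ⟨V, hV, rfl⟩ := exists_chol hM
    exact (det_toBlock_chol_pos hV _ fun i k h1 h2 => lt_of_lt_of_le h1 h2).ne'
  exact ContDiffAt.log ((hdet _).contDiffAt.div (hdet _).contDiffAt hpos) (pivot_pos hM q).ne'

end Smooth

/-! ### Asymptotics of the eigenvalues of graded matrices -/

theorem Dmat_apply_mul {n : ℕ} (h : Fin n → ℝ) (a : ℝ) (N : Matrix (Fin n) (Fin n) ℝ) (i k : Fin n) :
    (Dmat h a * N * Dmat h a) i k = a ^ h i * N i k * a ^ h k := by
  rw [Dmat, mul_diagonal, diagonal_mul]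

theorem isHermitian_Dmat_conj {n : ℕ} (h : Fin n → ℝ) (a : ℝ) {N : Matrix (Fin n) (Fin n) ℝ}
    (hN : N.IsHermitian) : (Dmat h a * N * Dmat h a).IsHermitian := by
  ext i k
  have := hN.apply i k
  simp only [star_trivial] at this
  rw [conjTranspose_apply, star_trivial, Dmat_apply_mul, Dmat_apply_mul, this]; ring

/-- If `N` is within relative distance `η` of the diagonal matrix `d` and the numbers
`d_q a^{2 h_q}` are already in increasing order, then the eigenvalues of `D_a N D_a` are within a
factor `1 ± η` of them. Both bounds are Courant–Fischer with coordinate subspaces. -/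
theorem eigR_diag_bound {n : ℕ} (h : Fin n → ℝ) {a : ℝ} (ha : 0 < a) {N : Matrix (Fin n) (Fin n) ℝ}
    (hN : N.IsHermitian) (d : Fin n → ℝ) (hd : ∀ i, 0 < d i) {η : ℝ} (hη0 : 0 ≤ η) (hη : η ≤ 1)
    (hmono : ∀ i k, i ≤ k → d i * (a ^ h i) ^ 2 ≤ d k * (a ^ h k) ^ 2)
    (hsmall : ∀ i, (∑ i, ∑ k, |N i k - diagonal d i k|) ≤ η * d i) (q : Fin n) :
    (1 - η) * (d q * (a ^ h q) ^ 2) ≤ eigR (Dmat h a * N * Dmat h a) q ∧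
      eigR (Dmat h a * N * Dmat h a) q ≤ (1 + η) * (d q * (a ^ h q) ^ 2) := by
  have hH := isHermitian_Dmat_conj h a hN
  have key : ∀ x : Fin n → ℝ, |x ⬝ᵥ ((Dmat h a * N * Dmat h a) *ᵥ x) -
      ∑ i, d i * (a ^ h i) ^ 2 * x i ^ 2| ≤ η * ∑ i, d i * (a ^ h i) ^ 2 * x i ^ 2 := by
    intro x
    set y : Fin n → ℝ := fun i => a ^ h i * x i with hy
    have h1 : x ⬝ᵥ ((Dmat h a * N * Dmat h a) *ᵥ x) - ∑ i, d i * (a ^ h i) ^ 2 * x i ^ 2 =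
        y ⬝ᵥ ((N - diagonal d) *ᵥ y) := by
      rw [Matrix.sub_mulVec, dotProduct_sub]
      congr 1
      · simp only [dotProduct, mulVec, Dmat_apply_mul, hy, Finset.mul_sum]
        exact Finset.sum_congr rfl fun i _ => Finset.sum_congr rfl fun k _ => by ring
      · simp only [dotProduct, mulVec_diagonal, hy]
        exact Finset.sum_congr rfl fun i _ => by ring
    rw [h1]
    refine (abs_quad_le _ _).trans ?_
    simp only [dotProduct, Finset.mul_sum]
    refine Finset.sum_le_sum fun i _ => ?_
    have h2 := mul_le_mul_of_nonneg_right (hsmall i) (mul_self_nonneg (y i))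
    simp only [Matrix.sub_apply] at h2 ⊢
    refine h2.trans (le_of_eq ?_)
    simp only [hy]; ring
  have hmm : ∀ i, 0 < d i * (a ^ h i) ^ 2 := fun i =>
    mul_pos (hd i) (pow_pos (Real.rpow_pos_of_pos ha _) 2)
  constructor
  · refine le_eigR hH q _ (fun i => Pi.single i 1) fun x hx => ?_
    have h1 := (abs_le.1 (key x)).1
    have h2 : d q * (a ^ h q) ^ 2 * (x ⬝ᵥ x) ≤ ∑ i, d i * (a ^ h i) ^ 2 * x i ^ 2 := by
      simp only [dotProduct, Finset.mul_sum]
      refine Finset.sum_le_sum fun i _ => ?_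
      rw [← sq]
      rcases lt_or_ge i q with hi | hi
      · have : x i = 0 := by simpa using hx i hi
        simp [this]
      · exact mul_le_mul_of_nonneg_right (hmono _ _ hi) (sq_nonneg _)
    nlinarith [mul_le_mul_of_nonneg_left h2 (sub_nonneg.2 hη)]
  · refine eigR_le hH q _ (fun i => Pi.single i 1) fun x hx => ?_
    have h1 := (abs_le.1 (key x)).2
    have h2 : ∑ i, d i * (a ^ h i) ^ 2 * x i ^ 2 ≤ d q * (a ^ h q) ^ 2 * (x ⬝ᵥ x) := by
      simp only [dotProduct, Finset.mul_sum]
      refine Finset.sum_le_sum fun i _ => ?_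
      rw [← sq]
      rcases lt_or_ge q i with hi | hi
      · have : x i = 0 := by simpa using hx i hi
        simp [this]
      · exact mul_le_mul_of_nonneg_right (hmono _ _ hi) (sq_nonneg _)
    nlinarith [mul_le_mul_of_nonneg_left h2 (by linarith : 0 ≤ 1 + η)]

theorem abs_log_sub_log_le {x m η : ℝ} (hm : 0 < m) (hη0 : 0 ≤ η) (hη : η ≤ 1 / 2)
    (h1 : (1 - η) * m ≤ x) (h2 : x ≤ (1 + η) * m) : |Real.log x - Real.log m| ≤ 2 * η := by
  have hx : 0 < x := lt_of_lt_of_le (by nlinarith) h1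
  rw [abs_le]
  constructor
  · have h3 := Real.one_sub_inv_le_log_of_pos (div_pos hx hm)
    rw [Real.log_div hx.ne' hm.ne', inv_div] at h3
    have h4 : m / x ≤ 1 + 2 * η := by
      rw [div_le_iff₀ hx]
      nlinarith
    linarith
  · have h3 := Real.log_le_sub_one_of_pos (div_pos hx hm)
    rw [Real.log_div hx.ne' hm.ne'] at h3
    have h4 : x / m ≤ 1 + η := by
      rw [div_le_iff₀ hm]; exact h2
    linarith

section Asymptotics

open Asymptotics

variable {n : ℕ} {α : Type*} {l : Filter α} {a : α → ℝ} {h : Fin n → ℝ} {γ : ℝ}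

theorem isBigO_rpow_neg (ha : Tendsto a l atTop) {e : ℝ} (he : e ≤ -γ) :
    (fun p => a p ^ e) =O[l] fun p => a p ^ (-γ) := by
  refine IsBigO.of_bound 1 ?_
  filter_upwards [ha.eventually_ge_atTop 1] with p hp
  rw [one_mul, Real.norm_of_nonneg (Real.rpow_nonneg (by linarith) _),
    Real.norm_of_nonneg (Real.rpow_nonneg (by linarith) _)]
  exact Real.rpow_le_rpow_of_exponent_le hp he

theorem tendsto_rpow_neg_zero (hγ : 0 < γ) (ha : Tendsto a l atTop) :
    Tendsto (fun p => a p ^ (-γ)) l (𝓝 0) :=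
  (tendsto_rpow_neg_atTop hγ).comp ha

/-- The relative eigenvalue asymptotics of `D_a N D_a` when `N` is within `O(a^{-γ})` of a
diagonal matrix. -/
theorem isBigO_log_eigR_of_diag (hmono : StrictMono h) (hγ : 0 < γ) (ha : Tendsto a l atTop)
    {N : α → Matrix (Fin n) (Fin n) ℝ} (hN : ∀ p, (N p).IsHermitian) {d : α → Fin n → ℝ}
    {d0 : Fin n → ℝ} (hd0 : ∀ i, 0 < d0 i) (hd : ∀ i, Tendsto (fun p => d p i) l (𝓝 (d0 i)))
    (hNd : ∀ i k, (fun p => N p i k - diagonal (d p) i k) =O[l] fun p => a p ^ (-γ)) (q : Fin n) :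
    (fun p => Real.log (eigR (Dmat h (a p) * N p * Dmat h (a p)) q) -
      (2 * h q * Real.log (a p) + Real.log (d p q))) =O[l] fun p => a p ^ (-γ) := by
  set δ : α → ℝ := fun p => ∑ i, ∑ k, |N p i k - diagonal (d p) i k| with hδ
  have hδO : δ =O[l] fun p => a p ^ (-γ) :=
    IsBigO.fun_sum fun i _ => IsBigO.fun_sum fun k _ => (hNd i k).norm_left
  have hδ0 : Tendsto δ l (𝓝 0) := hδO.trans_tendsto (tendsto_rpow_neg_zero hγ ha)
  have hδnn : ∀ p, 0 ≤ δ p := fun p =>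
    Finset.sum_nonneg fun i _ => Finset.sum_nonneg fun k _ => abs_nonneg _
  obtain ⟨c, hc, hcd⟩ : ∃ c > 0, ∀ i, c < d0 i := by
    have : Nonempty (Fin n) := ⟨q⟩
    obtain ⟨i, hi⟩ := Finite.exists_min d0
    exact ⟨d0 i / 2, half_pos (hd0 i), fun k => by linarith [hd0 i, hi k]⟩
  refine IsBigO.trans (IsBigO.of_bound (2 * c⁻¹) ?_) hδO
  have e1 : ∀ᶠ p in l, ∀ i, c < d p i :=
    eventually_all.2 fun i => (hd i).eventually_const_lt (hcd i)
  have e2 : ∀ᶠ p in l, c⁻¹ * δ p ≤ 1 / 2 := by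
    have : Tendsto (fun p => c⁻¹ * δ p) l (𝓝 0) := by simpa using hδ0.const_mul c⁻¹
    exact (this.eventually_lt_const (by norm_num : (0 : ℝ) < 1 / 2)).mono fun _ h => h.le
  have e3 : ∀ᶠ p in l, ∀ i k, i ≤ k → d p i * (a p ^ h i) ^ 2 ≤ d p k * (a p ^ h k) ^ 2 := by
    refine eventually_all.2 fun i => eventually_all.2 fun k => ?_
    rcases lt_or_ge i k with hik | hik
    · have hpos : 0 < 2 * (h k - h i) := by linarith [hmono hik]
      have t1 : Tendsto (fun p => d p k * a p ^ (2 * (h k - h i))) l atTop :=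
        (hd k).pos_mul_atTop (hd0 k) ((tendsto_rpow_atTop hpos).comp ha)
      filter_upwards [ha.eventually_gt_atTop 0, t1.eventually_ge_atTop (d0 i + 1),
        (hd i).eventually_lt_const (lt_add_one (d0 i))] with p hp1 hp2 hp3 _
      have h4 : (a p ^ h k) ^ 2 = a p ^ (2 * (h k - h i)) * (a p ^ h i) ^ 2 := by
        rw [← Real.rpow_natCast, ← Real.rpow_natCast, ← Real.rpow_mul hp1.le, ← Real.rpow_mul hp1.le,
          ← Real.rpow_add hp1]
        congr 1; push_cast; ring
      rw [h4, ← mul_assoc]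
      exact mul_le_mul_of_nonneg_right (hp3.le.trans hp2) (sq_nonneg _)
    · refine Eventually.of_forall fun p hki => ?_
      rw [le_antisymm hki hik]
  filter_upwards [e1, e2, e3, ha.eventually_gt_atTop 0] with p h1 h2 h3 h4
  have hη0 : 0 ≤ c⁻¹ * δ p := mul_nonneg (inv_nonneg.2 hc.le) (hδnn p)
  have hdp : ∀ i, 0 < d p i := fun i => hc.trans (h1 i)
  have hb := eigR_diag_bound h h4 (hN p) (d p) hdp hη0 (by linarith) h3 (fun i => by
    have : δ p = c⁻¹ * δ p * c := by field_simp
    change δ p ≤ _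
    calc δ p = c⁻¹ * δ p * c := this
      _ ≤ _ := mul_le_mul_of_nonneg_left (h1 i).le hη0) q
  have hpw : 0 < a p ^ h q := Real.rpow_pos_of_pos h4 _
  have hm : 0 < d p q * (a p ^ h q) ^ 2 := mul_pos (hdp q) (pow_pos hpw 2)
  have h5 := abs_log_sub_log_le hm hη0 h2 hb.1 hb.2
  have h6 : Real.log (d p q * (a p ^ h q) ^ 2) = 2 * h q * Real.log (a p) + Real.log (d p q) := by
    rw [Real.log_mul (hdp q).ne' (pow_pos hpw 2).ne', Real.log_pow, Real.log_rpow h4]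
    push_cast; ring
  rw [← h6, Real.norm_eq_abs, Real.norm_of_nonneg (hδnn p)]
  exact h5.trans (le_of_eq (mul_assoc _ _ _).symm)

/-- The conjugate `D_a V D_a⁻¹`, written entrywise as `V_{ik} a^{h_i - h_k}`. -/
noncomputable def conjD (h : Fin n → ℝ) (a : ℝ) (V : Matrix (Fin n) (Fin n) ℝ) :
    Matrix (Fin n) (Fin n) ℝ := of fun i k => V i k * a ^ (h i - h k)

theorem conjD_mul {b : ℝ} (hb : 0 < b) (V : Matrix (Fin n) (Fin n) ℝ) :
    conjD h b V * Dmat h b = Dmat h b * V := by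
  ext i k
  rw [Dmat, mul_diagonal, diagonal_mul, conjD, of_apply, mul_assoc, ← Real.rpow_add hb]
  rw [sub_add_cancel, mul_comm]

theorem conjD_gram {b : ℝ} (hb : 0 < b) (V G : Matrix (Fin n) (Fin n) ℝ) :
    Dmat h b * ((conjD h b V)ᵀ * G * conjD h b V) * Dmat h b =
      (Dmat h b * V)ᵀ * G * (Dmat h b * V) := by
  rw [← conjD_mul hb V, transpose_mul]
  have : (Dmat h b)ᵀ = Dmat h b := by rw [Dmat, diagonal_transpose]
  rw [this]; simp only [Matrix.mul_assoc]

theorem conjD_self (b : ℝ) (V : Matrix (Fin n) (Fin n) ℝ) (i : Fin n) :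
    conjD h b V i i = V i i := by
  simp [conjD]

/-- Conjugation by `D_a` contracts a bounded upper triangular `V` to its diagonal at rate `a^{-γ}`,
because `h_i - h_k ≤ -γ` above the diagonal. Hence the congruence of `G` by the conjugate of `V`
is `O(a^{-γ})`-close to the congruence of `G` by the diagonal of `V`. -/
theorem isBigO_conjD (hgap : ∀ i k, i < k → γ ≤ h k - h i) (hγ : 0 < γ)
    (ha : Tendsto a l atTop) {V : α → Matrix (Fin n) (Fin n) ℝ}
    (hV : ∀ᶠ p in l, UpperPos (V p)) (hb : ∀ i k, (fun p => V p i k) =O[l] fun _ => (1 : ℝ))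
    (G : Matrix (Fin n) (Fin n) ℝ) (i k : Fin n) :
    (fun p => ((conjD h (a p) (V p))ᵀ * G * conjD h (a p) (V p)) i k -
      V p i i * G i k * V p k k) =O[l] fun p => a p ^ (-γ) := by
  have hε1 : (fun p => a p ^ (-γ)) =O[l] fun _ => (1 : ℝ) :=
    (tendsto_rpow_neg_zero hγ ha).isBigO_one ℝ
  have h1 : ∀ i k, (fun p => conjD h (a p) (V p) i k - diagonal (fun i => V p i i) i k) =O[l]
      fun p => a p ^ (-γ) := by
    intro i k
    rcases lt_trichotomy i k with hik | hik | hik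
    · have e : (fun p => conjD h (a p) (V p) i k - diagonal (fun i => V p i i) i k) =
          fun p => V p i k * a p ^ (h i - h k) := by
        funext p; rw [diagonal_apply_ne _ hik.ne, sub_zero]; rfl
      rw [e]
      simpa using (hb i k).mul (isBigO_rpow_neg (γ := γ) ha (e := h i - h k)
        (by linarith [hgap i k hik]))
    · subst hik
      simp only [conjD_self, diagonal_apply_eq, sub_self]
      exact isBigO_zero _ _
    · refine IsBigO.of_bound 0 ?_
      filter_upwards [hV] with p hp
      rw [diagonal_apply_ne _ hik.ne']
      simp [conjD, hp.1 i k hik]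
  have hdO : ∀ i k, (fun p => diagonal (fun i => V p i i) i k) =O[l] fun _ => (1 : ℝ) := by
    intro i k
    by_cases hik : i = k
    · subst hik; simpa using hb i i
    · simp only [diagonal_apply_ne _ hik]; exact isBigO_zero _ _
  have h2 : ∀ i k, (fun p => conjD h (a p) (V p) i k) =O[l] fun _ => (1 : ℝ) := by
    intro i k
    simpa using ((h1 i k).trans hε1).add (hdO i k)
  have h3 : ∀ p, V p i i * G i k * V p k k =
      ((diagonal fun i => V p i i)ᵀ * G * (diagonal fun i => V p i i)) i k := by
    intro p; rw [diagonal_transpose, mul_diagonal, diagonal_mul]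
  have h4 : (fun p => ((conjD h (a p) (V p))ᵀ * G * conjD h (a p) (V p)) i k -
      V p i i * G i k * V p k k) = fun p => ∑ m', ∑ m,
        G m m' * ((conjD h (a p) (V p) m i - diagonal (fun i => V p i i) m i) *
            conjD h (a p) (V p) m' k +
          diagonal (fun i => V p i i) m i *
            (conjD h (a p) (V p) m' k - diagonal (fun i => V p i i) m' k)) := by
    funext p
    rw [h3]
    simp only [Matrix.mul_apply, transpose_apply, Finset.sum_mul, ← Finset.sum_sub_distrib]
    exact Finset.sum_congr rfl fun _ _ => Finset.sum_congr rfl fun _ _ => by ring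
  rw [h4]
  refine IsBigO.fun_sum fun m' _ => IsBigO.fun_sum fun m _ => IsBigO.const_mul_left ?_ _
  refine IsBigO.add ?_ ?_
  · simpa using (h1 m i).mul (h2 m' k)
  · simpa using (hdO m i).mul (h1 m' k)

section Matrices

attribute [local instance] Matrix.normedAddCommGroup Matrix.normedSpace

/-- Cholesky factors along a filter on which the matrices converge: they are eventually defined and
bounded, and their squared diagonal entries are the pivots. -/
theorem exists_chol_family [l.NeBot] {M : α → Matrix (Fin n) (Fin n) ℝ} {M0 : Matrix (Fin n) (Fin n) ℝ}
    (hM : Tendsto M l (𝓝 M0)) (hpd : ∀ᶠ p in l, (M p).PosDef) :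
    ∃ V : α → Matrix (Fin n) (Fin n) ℝ, (∀ᶠ p in l, UpperPos (V p) ∧ V p * (V p)ᵀ = M p) ∧
      ∀ i k, (fun p => V p i k) =O[l] fun _ => (1 : ℝ) := by
  obtain ⟨V, hV⟩ := (hpd.mono fun p hp => exists_chol hp).choice
  refine ⟨V, hV, fun i k => ?_⟩
  have hMii : Tendsto (fun p => M p i i) l (𝓝 (M0 i i)) :=
    tendsto_pi_nhds.1 (tendsto_pi_nhds.1 hM i) i
  refine IsBigO.of_bound (M0 i i + 2) ?_
  filter_upwards [hV, hMii.eventually_lt_const (lt_add_one _)] with p hp h1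
  have h2 : V p i k ^ 2 ≤ M p i i := by
    rw [← hp.2, Matrix.mul_apply]
    simp only [transpose_apply, ← sq]
    exact Finset.single_le_sum (f := fun k => V p i k ^ 2) (fun _ _ => sq_nonneg _)
      (Finset.mem_univ k)
  rw [norm_one, mul_one, Real.norm_eq_abs]
  have h3 := abs_le_of_sq_le_sq (a := V p i k) (b := M0 i i + 2)
  nlinarith [sq_abs (V p i k), abs_nonneg (V p i k), sq_nonneg (|V p i k| - 1)]

theorem tendsto_pivot {M : α → Matrix (Fin n) (Fin n) ℝ} {M0 : Matrix (Fin n) (Fin n) ℝ}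
    (hM0 : M0.PosDef) (hM : Tendsto M l (𝓝 M0)) (hpd : ∀ᶠ p in l, (M p).PosDef) (q : Fin n) :
    Tendsto (fun p => pivot (M p) q) l (𝓝 (pivot M0 q)) := by
  have h1 : Tendsto (fun p => Real.log (pivot (M p) q)) l (𝓝 (Real.log (pivot M0 q))) :=
    (contDiffAt_log_pivot hM0 q).continuousAt.tendsto.comp hM
  have h2 := (Real.continuous_exp.tendsto _).comp h1
  rw [Real.exp_log (pivot_pos hM0 q)] at h2
  refine h2.congr' ?_
  filter_upwards [hpd] with p hp
  exact Real.exp_log (pivot_pos hp q)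

/-- Eigenvalue asymptotics of `D_a M D_a` for convergent positive definite `M = V Vᵀ`: swapping the
factors of `(D_a V) (D_a V)ᵀ` turns the matrix into `D_a (KᵀK) D_a` with `K = D_a V D_a⁻¹` nearly
diagonal. -/
theorem isBigO_log_eigR_core [l.NeBot] (hmono : StrictMono h) (hgap : ∀ i k, i < k → γ ≤ h k - h i)
    (hγ : 0 < γ) (ha : Tendsto a l atTop) {M : α → Matrix (Fin n) (Fin n) ℝ}
    {M0 : Matrix (Fin n) (Fin n) ℝ} (hM0 : M0.PosDef) (hM : Tendsto M l (𝓝 M0))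
    (hpd : ∀ᶠ p in l, (M p).PosDef) (q : Fin n) :
    (fun p => Real.log (eigR (Dmat h (a p) * M p * Dmat h (a p)) q) -
      (2 * h q * Real.log (a p) + Real.log (pivot (M p) q))) =O[l] fun p => a p ^ (-γ) := by
  obtain ⟨V, hV, hVb⟩ := exists_chol_family hM hpd
  have hO := isBigO_conjD hgap hγ ha (hV.mono fun p hp => hp.1) hVb 1
  have hd : ∀ i, Tendsto (fun p => V p i i * V p i i) l (𝓝 (pivot M0 i)) := by
    intro i
    refine (tendsto_pivot hM0 hM hpd i).congr' ?_
    filter_upwards [hV] with p hp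
    rw [← hp.2, pivot_chol hp.1, sq]
  have hmain := isBigO_log_eigR_of_diag hmono hγ ha
    (N := fun p => (conjD h (a p) (V p))ᵀ * 1 * conjD h (a p) (V p))
    (fun p => by
      rw [Matrix.mul_one]
      simpa using Matrix.isHermitian_conjTranspose_mul_self (conjD h (a p) (V p)))
    (d := fun p i => V p i i * V p i i) (fun i => pivot_pos hM0 i) hd
    (fun i k => by
      refine (hO i k).congr_left fun p => ?_
      by_cases hik : i = k
      · subst hik; simp
      · simp [hik]) q
  refine hmain.congr' ?_ EventuallyEq.rfl
  filter_upwards [hV, ha.eventually_gt_atTop 0] with p hp hap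
  have hDt : (Dmat h (a p))ᵀ = Dmat h (a p) := by rw [Dmat, diagonal_transpose]
  have e1 : Dmat h (a p) * M p * Dmat h (a p) =
      (Dmat h (a p) * V p) * (Dmat h (a p) * V p)ᵀ := by
    rw [← hp.2, transpose_mul, hDt]; simp only [Matrix.mul_assoc]
  rw [conjD_gram hap, Matrix.mul_one, e1, eigR_swap, ← hp.2, pivot_chol hp.1, sq]

/-- Eigenvalue asymptotics of `P D_a M D_a Pᵀ` for convergent positive definite `M = V Vᵀ`. Swapping
the factors of `(P D_a V) (P D_a V)ᵀ` gives `D_a R D_a` with `R = Kᵀ (PᵀP) K`, `K = D_a V D_a⁻¹`, and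
`R` is `O(a^{-γ})`-close to `Q = v (PᵀP) v`, where `v` is the diagonal of `V`. The pivots of `Q` are
products of those of `M` and of `PᵀP`. -/
theorem isBigO_log_eigR [l.NeBot] (hmono : StrictMono h) (hgap : ∀ i k, i < k → γ ≤ h k - h i)
    (hγ : 0 < γ) (ha : Tendsto a l atTop) {P : Matrix (Fin n) (Fin n) ℝ} (hP : IsUnit P)
    {M : α → Matrix (Fin n) (Fin n) ℝ} {M0 : Matrix (Fin n) (Fin n) ℝ} (hM0 : M0.PosDef)
    (hM : Tendsto M l (𝓝 M0)) (hpd : ∀ᶠ p in l, (M p).PosDef) (q : Fin n) :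
    (fun p => Real.log (eigR (P * Dmat h (a p) * M p * Dmat h (a p) * Pᵀ) q) -
      (2 * h q * Real.log (a p) + Real.log (pivot (M p) q) + Real.log (pivot (Pᵀ * P) q)))
      =O[l] fun p => a p ^ (-γ) := by
  set G := Pᵀ * P with hG
  have hGpd : G.PosDef := by
    have := Matrix.PosDef.conjTranspose_mul_self P (Matrix.mulVec_injective_of_isUnit hP)
    simpa [hG] using this
  obtain ⟨V, hV, hVb⟩ := exists_chol_family hM hpd
  set v : α → Fin n → ℝ := fun p i => V p i i
  set R : α → Matrix (Fin n) (Fin n) ℝ :=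
    fun p => (conjD h (a p) (V p))ᵀ * G * conjD h (a p) (V p) with hR
  set Q : α → Matrix (Fin n) (Fin n) ℝ := fun p => diagonal (v p) * G * diagonal (v p) with hQ
  set v0 : Fin n → ℝ := fun i => √(pivot M0 i) with hv0
  have hv0pos : ∀ i, 0 < v0 i := fun i => Real.sqrt_pos.2 (pivot_pos hM0 i)
  set R0 : Matrix (Fin n) (Fin n) ℝ := diagonal v0 * G * diagonal v0 with hR0
  have hR0pd : R0.PosDef := posDef_diagonal_conj hGpd hv0pos
  have hvt : ∀ i, Tendsto (fun p => v p i) l (𝓝 (v0 i)) := by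
    intro i
    refine ((Real.continuous_sqrt.tendsto _).comp (tendsto_pivot hM0 hM hpd i)).congr' ?_
    filter_upwards [hV] with p hp
    rw [Function.comp, ← hp.2, pivot_chol hp.1, Real.sqrt_sq (hp.1.2 i).le]
  have hQt : Tendsto Q l (𝓝 R0) := by
    refine tendsto_pi_nhds.2 fun i => tendsto_pi_nhds.2 fun k => ?_
    simp only [hQ, hR0, mul_diagonal, diagonal_mul]
    exact ((hvt i).mul_const _).mul (hvt k)
  have hRQ : (fun p => R p - Q p) =O[l] fun p => a p ^ (-γ) := by
    refine isBigO_pi.2 fun i => isBigO_pi.2 fun k => ?_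
    refine (isBigO_conjD hgap hγ ha (hV.mono fun p hp => hp.1) hVb G i k).congr_left fun p => ?_
    simp only [hR, hQ, Matrix.sub_apply, mul_diagonal, diagonal_mul, v]
  have hRt : Tendsto R l (𝓝 R0) := by
    have := (hRQ.trans_tendsto (tendsto_rpow_neg_zero hγ ha)).add hQt
    rw [zero_add] at this
    exact this.congr fun p => sub_add_cancel (R p) (Q p)
  have hRpd : ∀ᶠ p in l, (R p).PosDef := by
    filter_upwards [hV, ha.eventually_gt_atTop 0] with p hp hap
    have hu : UpperPos (conjD h (a p) (V p)) :=
      ⟨fun i k hik => by simp [conjD, hp.1.1 i k hik], fun i => by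
        rw [conjD_self]; exact hp.1.2 i⟩
    have hdet : (conjD h (a p) (V p)).det ≠ 0 := by
      rw [Matrix.det_of_isUpperTriangular (fun i k h => hu.1 i k h)]
      exact Finset.prod_ne_zero_iff.2 fun i _ => (hu.2 i).ne'
    have := hGpd.conjTranspose_mul_mul_same (B := conjD h (a p) (V p))
      (Matrix.mulVec_injective_of_isUnit
        ((Matrix.isUnit_iff_isUnit_det _).2 hdet.isUnit))
    simpa using this
  have hcore := isBigO_log_eigR_core hmono hgap hγ ha hR0pd hRt hRpd q
  -- `log pivot` is locally Lipschitz at the common limit of `R` and `Q`.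
  have hlip : (fun p => Real.log (pivot (R p) q) - Real.log (pivot (Q p) q)) =O[l]
      fun p => a p ^ (-γ) := by
    have h1 := ((contDiffAt_log_pivot hR0pd q).hasStrictFDerivAt one_ne_zero).isBigO_sub
    exact (h1.comp_tendsto (hRt.prodMk_nhds hQt)).trans hRQ
  refine (hcore.add hlip).congr' ?_ EventuallyEq.rfl
  filter_upwards [hV, ha.eventually_gt_atTop 0] with p hp hap
  have hDt : (Dmat h (a p))ᵀ = Dmat h (a p) := by rw [Dmat, diagonal_transpose]
  have e1 : P * Dmat h (a p) * M p * Dmat h (a p) * Pᵀ =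
      (P * Dmat h (a p) * V p) * (P * Dmat h (a p) * V p)ᵀ := by
    rw [← hp.2, transpose_mul, transpose_mul, hDt]; simp only [Matrix.mul_assoc]
  have e2 : Dmat h (a p) * R p * Dmat h (a p) =
      (P * Dmat h (a p) * V p)ᵀ * (P * Dmat h (a p) * V p) := by
    rw [hR, conjD_gram hap, hG]; simp only [transpose_mul, Matrix.mul_assoc]
  have e3 : Real.log (pivot (Q p) q) = Real.log (pivot (M p) q) + Real.log (pivot G q) := by
    rw [hQ, pivot_diagonal hGpd hp.1.2, ← hp.2, pivot_chol hp.1,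
      Real.log_mul (pow_pos (hp.1.2 q) 2).ne' (pivot_pos hGpd q).ne']
  rw [e1, eigR_swap, ← e2, e3]; ring

end Matrices

end Asymptotics

/-! ### Extended continuous mapping and linear images of Gaussians -/

section ExtendedMapping

variable {E F : Type*} [NormedAddCommGroup E]

/-- Continuous cutoff, equal to `0` on the ball of radius `K` and to `1` off the ball of radius
`K + 1`. -/
noncomputable def cutoff (E : Type*) [NormedAddCommGroup E] (K : ℕ) :
    BoundedContinuousFunction E ℝ :=
  BoundedContinuousFunction.ofNormedAddCommGroup (fun z => max 0 (min 1 (‖z‖ - K)))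
    (by fun_prop) 1 (fun z => by
      rw [Real.norm_eq_abs, abs_of_nonneg (le_max_left _ _)]
      exact max_le zero_le_one (min_le_left _ _))

theorem cutoff_nonneg (K : ℕ) (z : E) : 0 ≤ cutoff E K z := le_max_left _ _

theorem cutoff_le_one (K : ℕ) (z : E) : cutoff E K z ≤ 1 := max_le zero_le_one (min_le_left _ _)

theorem cutoff_eq_one (K : ℕ) (z : E) (hz : (K : ℝ) + 1 ≤ ‖z‖) : cutoff E K z = 1 := by
  change max 0 (min 1 (‖z‖ - K)) = 1
  rw [min_eq_left (by linarith), max_eq_right zero_le_one]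

theorem cutoff_eq_zero (K : ℕ) (z : E) (hz : ‖z‖ ≤ K) : cutoff E K z = 0 := by
  change max 0 (min 1 (‖z‖ - K)) = 0
  exact max_eq_left ((min_le_right _ _).trans (by linarith))

variable [MeasurableSpace E] [BorelSpace E]

theorem tendsto_integral_cutoff (μG : Measure E) [IsProbabilityMeasure μG] :
    Tendsto (fun K : ℕ => ∫ z, cutoff E K z ∂μG) atTop (𝓝 0) := by
  have := tendsto_integral_of_dominated_convergence (μ := μG) (F := fun (K : ℕ) z => cutoff E K z)
    (f := fun _ => (0 : ℝ)) (fun _ => 1)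
    (fun K => (cutoff E K).continuous.measurable.aestronglyMeasurable)
    (integrable_const _)
    (fun K => Eventually.of_forall fun z => by
      rw [Real.norm_eq_abs, abs_of_nonneg (cutoff_nonneg K z)]
      exact cutoff_le_one K z)
    (Eventually.of_forall fun z => by
      obtain ⟨K0, hK0⟩ := exists_nat_ge ‖z‖
      refine tendsto_const_nhds.congr' ?_
      filter_upwards [eventually_ge_atTop K0] with K hK
      exact (cutoff_eq_zero K z (hK0.trans (by exact_mod_cast hK))).symm)
  simpa using this

variable [ProperSpace E]

/-- If the laws of `Z k` converge weakly to `μG` and the uniformly bounded functions `G k`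
converge continuously to `G0`, then `E[G k (Z k)] → ∫ G0 dμG`: convergence is uniform on balls,
and the mass that `Z k` puts off a large ball is controlled by testing against the cutoff. -/
theorem tendsto_integral_comp {Ω : Type*} [MeasurableSpace Ω] (μ : Measure Ω)
    [IsProbabilityMeasure μ] {Z : ℕ → Ω → E} (hZ : ∀ k, Measurable (Z k)) {μG : Measure E}
    [IsProbabilityMeasure μG] (hconv : _root_.TendstoInDistribution μ Z μG)
    {G : ℕ → E → ℝ} (hG : ∀ k, Measurable (G k)) (G0 : BoundedContinuousFunction E ℝ)
    {D : ℝ} (hGD : ∀ k z, |G k z| ≤ D) (hG0D : ∀ z, |G0 z| ≤ D)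
    (hlim : ∀ z, Tendsto (fun p : ℕ × E => G p.1 p.2) (atTop ×ˢ 𝓝 z) (𝓝 (G0 z))) :
    Tendsto (fun k => ∫ ω, G k (Z k ω) ∂μ) atTop (𝓝 (∫ z, G0 z ∂μG)) := by
  have hloc : ∀ K : Set E, IsCompact K → TendstoUniformlyOn G G0 atTop K := by
    intro K hK
    rw [← tendstoLocallyUniformlyOn_iff_tendstoUniformlyOn_of_compact hK,
      tendstoLocallyUniformlyOn_iff_forall_tendsto]
    intro x _
    have h1 : Tendsto (fun p : ℕ × E => G0 p.2) (atTop ×ˢ 𝓝[K] x) (𝓝 (G0 x)) :=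
      (G0.continuous.tendsto x).comp (tendsto_snd.mono_right nhdsWithin_le_nhds)
    have h2 := (hlim x).mono_left (prod_mono le_rfl nhdsWithin_le_nhds :
      atTop ×ˢ 𝓝[K] x ≤ (atTop : Filter ℕ) ×ˢ 𝓝 x)
    exact (h1.prodMk_nhds h2).mono_right (nhds_le_uniformity _)
  have hD : 0 ≤ D := (abs_nonneg _).trans (hG0D 0)
  have hdiff : Tendsto (fun k => ∫ ω, (G k (Z k ω) - G0 (Z k ω)) ∂μ) atTop (𝓝 0) := by
    rw [Metric.tendsto_atTop']
    intro ε hε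
    -- The radius is chosen so that the limit law has mass `< ε / (4 D + 1)` beyond it.
    have hη : 0 < ε / (4 * D + 1) := by positivity
    obtain ⟨K, hK⟩ := ((tendsto_integral_cutoff μG).eventually (gt_mem_nhds hη)).exists
    have hev : ∀ᶠ k in atTop, ∫ ω, cutoff E K (Z k ω) ∂μ < ε / (4 * D + 1) :=
      (hconv (cutoff E K)).eventually (gt_mem_nhds hK)
    have hunif := Metric.tendstoUniformlyOn_iff.1
      (hloc _ (isCompact_closedBall (0 : E) (K + 1))) (ε / 4) (by positivity)
    obtain ⟨N, hN⟩ := eventually_atTop.1 (hev.and hunif)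
    refine ⟨N, fun k hk => ?_⟩
    obtain ⟨h1, h2⟩ := hN k hk.le
    rw [dist_zero_right]
    have hbint : Integrable (fun ω => ε / 4 + 2 * D * cutoff E K (Z k ω)) μ := by
      refine Integrable.of_bound (C := ε / 4 + 2 * D)
        ((((cutoff E K).continuous.measurable.comp (hZ k)).const_mul _).const_add _).aestronglyMeasurable
        (Eventually.of_forall fun ω => ?_)
      have := cutoff_nonneg K (Z k ω)
      have h' := cutoff_le_one K (Z k ω)
      rw [Real.norm_eq_abs, abs_of_nonneg (by positivity)]
      nlinarith
    have hcint : Integrable (fun ω => cutoff E K (Z k ω)) μ := by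
      refine Integrable.of_bound (C := 1)
        ((cutoff E K).continuous.measurable.comp (hZ k)).aestronglyMeasurable
        (Eventually.of_forall fun ω => ?_)
      rw [Real.norm_eq_abs, abs_of_nonneg (cutoff_nonneg _ _)]
      exact cutoff_le_one _ _
    have hbd := norm_integral_le_of_norm_le hbint (f := fun ω => G k (Z k ω) - G0 (Z k ω))
      (Eventually.of_forall fun ω => by
        have hc0 := cutoff_nonneg K (Z k ω)
        by_cases hz : ‖Z k ω‖ ≤ K + 1
        · have := h2 (Z k ω) (by simpa using hz)
          rw [dist_comm, dist_eq_norm] at this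
          have h3 : 0 ≤ 2 * D * cutoff E K (Z k ω) := by positivity
          linarith
        · rw [cutoff_eq_one K _ (le_of_not_ge hz), Real.norm_eq_abs]
          have h3 := abs_sub (G k (Z k ω)) (G0 (Z k ω))
          have h4 := hGD k (Z k ω)
          have h5 := hG0D (Z k ω)
          linarith)
    refine hbd.trans_lt ?_
    rw [integral_add (integrable_const _) (hcint.const_mul _), integral_const_mul]
    simp only [integral_const, probReal_univ, one_smul]
    have h3 : 2 * D * ∫ ω, cutoff E K (Z k ω) ∂μ ≤ 2 * D * (ε / (4 * D + 1)) := by gcongr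
    have h4 : 2 * D * (ε / (4 * D + 1)) ≤ ε / 2 := by
      rw [mul_div_assoc', div_le_div_iff₀ (by positivity) (by positivity)]
      nlinarith
    linarith
  have := hdiff.add (hconv G0)
  rw [zero_add] at this
  refine this.congr fun k => ?_
  have hi1 : Integrable (fun ω => G k (Z k ω)) μ :=
    Integrable.of_bound (C := D) ((hG k).comp (hZ k)).aestronglyMeasurable
      (Eventually.of_forall fun ω => hGD k _)
  have hi2 : Integrable (fun ω => G0 (Z k ω)) μ :=
    Integrable.of_bound (C := D) (G0.continuous.measurable.comp (hZ k)).aestronglyMeasurable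
      (Eventually.of_forall fun ω => hG0D _)
  rw [integral_sub hi1 hi2]
  ring

/-- Extended continuous mapping theorem: weak convergence is preserved under maps `g k` that converge
continuously to `L`. -/
theorem tendstoInDistribution_comp {Ω : Type*} [MeasurableSpace Ω] (μ : Measure Ω)
    [IsProbabilityMeasure μ] {Z : ℕ → Ω → E} (hZ : ∀ k, Measurable (Z k)) {μG : Measure E}
    [IsProbabilityMeasure μG] (hconv : _root_.TendstoInDistribution μ Z μG)
    [TopologicalSpace F] [MeasurableSpace F] [BorelSpace F] {g : ℕ → E → F}
    (hg : ∀ k, Measurable (g k)) {L : E → F} (hL : Continuous L)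
    (hlim : ∀ z, Tendsto (fun p : ℕ × E => g p.1 p.2) (atTop ×ˢ 𝓝 z) (𝓝 (L z)))
    {Y : ℕ → Ω → F} (hY : ∀ᶠ k in atTop, ∀ ω, Y k ω = g k (Z k ω))
    (hLm : Measurable L) : _root_.TendstoInDistribution μ Y (μG.map L) := by
  intro f
  have hfm : Measurable f := f.continuous.measurable
  rw [integral_map hLm.aemeasurable (f.continuous.measurable.aestronglyMeasurable)]
  refine (tendsto_integral_comp μ hZ hconv (G := fun k z => f (g k z)) (D := ‖f‖)
    (fun k => hfm.comp (hg k)) (f.compContinuous ⟨L, hL⟩) (fun k z => f.norm_coe_le_norm _)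
    (fun z => f.norm_coe_le_norm _)
    (fun z => (f.continuous.tendsto _).comp (hlim z))).congr' ?_
  filter_upwards [hY] with k hk
  simp only [hk]

end ExtendedMapping

theorem quad_sum {ι : Type*} [Fintype ι] (v : ι → ℝ) (S : Matrix ι ι ℝ) :
    ∑ i, ∑ j, v i * S i j * v j = v ⬝ᵥ (S *ᵥ v) := by
  simp only [dotProduct, mulVec, Finset.mul_sum, mul_assoc]

/-- The image of a centered Gaussian under a linear map is centered Gaussian. -/
theorem isCenteredGaussian_map {ι κ : Type*} [Fintype ι] [Fintype κ] {μG : Measure (ι → ℝ)}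
    {C : Matrix ι ι ℝ} (hG : IsCenteredGaussian μG C) (A : Matrix κ ι ℝ) :
    IsCenteredGaussian (μG.map fun z => A *ᵥ z) (A * C * Aᵀ) := by
  obtain ⟨hp, hm⟩ := hG
  have hA : Measurable fun z : ι → ℝ => A *ᵥ z := by
    refine measurable_pi_lambda _ fun k => ?_
    simp only [mulVec, dotProduct]
    fun_prop
  refine ⟨Measure.isProbabilityMeasure_map hA.aemeasurable, fun c => ?_⟩
  rw [Measure.map_map (by fun_prop) hA]
  have h1 : (fun x : κ → ℝ => ∑ i, c i * x i) ∘ (fun z => A *ᵥ z) =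
      fun z => ∑ i, (c ᵥ* A) i * z i := by
    funext z
    exact dotProduct_mulVec c A z
  rw [h1, hm, quad_sum, quad_sum]
  congr 2
  rw [← mulVec_mulVec, ← mulVec_mulVec, dotProduct_mulVec c A, mulVec_transpose]

/-! ### Delta method for the log-eigenvalues -/

section DeltaMethod

open Asymptotics

variable {n : ℕ} {α : Type*} {l : Filter α} {a : α → ℝ} {h : Fin n → ℝ} {γ : ℝ}

theorem eigR_pos {M : Matrix (Fin n) (Fin n) ℝ} (hM : M.PosDef) (q : Fin n) : 0 < eigR M q := by
  rw [eigR_of_herm hM.1]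
  exact hM.eigenvalues_pos _

/-- Positive definiteness is an open condition among symmetric matrices. -/
theorem eventually_posDef {M : α → Matrix (Fin n) (Fin n) ℝ} {M0 : Matrix (Fin n) (Fin n) ℝ}
    (hM0 : M0.PosDef) (hM : Tendsto M l (𝓝 M0)) (hs : ∀ p, (M p).IsHermitian) :
    ∀ᶠ p in l, (M p).PosDef := by
  rcases Nat.eq_zero_or_pos n with rfl | hn
  · refine Eventually.of_forall fun p => ?_
    rwa [Subsingleton.elim (M p) M0]
  obtain ⟨v, hv1, hv2⟩ := exists_spectral hM0.1
  have hlow : ∀ x, eigR M0 ⟨0, hn⟩ * (x ⬝ᵥ x) ≤ x ⬝ᵥ (M0 *ᵥ x) := fun x => by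
    rw [hv1, hv2, Finset.mul_sum]
    exact Finset.sum_le_sum fun i _ =>
      mul_le_mul_of_nonneg_right (eigR_mono M0 (Nat.zero_le _)) (sq_nonneg _)
  have hsum : Tendsto (fun p => ∑ i, ∑ k, |(M p - M0) i k|) l (𝓝 0) := by
    have : Tendsto (fun p => ∑ i, ∑ k, |(M p - M0) i k|) l (𝓝 (∑ i : Fin n, ∑ k : Fin n, 0)) := by
      refine tendsto_finsetSum _ fun i _ => tendsto_finsetSum _ fun k _ => ?_
      have h1 : Tendsto (fun p => M p i k) l (𝓝 (M0 i k)) :=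
        tendsto_pi_nhds.1 (tendsto_pi_nhds.1 hM i) k
      simpa using (h1.sub_const (M0 i k)).abs
    simpa using this
  filter_upwards [hsum.eventually (gt_mem_nhds (eigR_pos hM0 ⟨0, hn⟩))] with p hp
  refine Matrix.PosDef.of_dotProduct_mulVec_pos (hs p) fun x hx => ?_
  have h1 := (abs_le.1 (abs_quad_le (M p - M0) x)).1
  rw [Matrix.sub_mulVec, dotProduct_sub] at h1
  have h2 := hlow x
  have h3 := dotProduct_self_pos' hx
  rw [star_trivial]
  nlinarith

section

attribute [local instance] Matrix.normedAddCommGroup Matrix.normedSpace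

/-- The derivative at `B0` of the logarithm of the `q`-th pivot. -/
noncomputable def dlogPivot (B0 : Matrix (Fin n) (Fin n) ℝ) (q : Fin n) :
    Matrix (Fin n) (Fin n) ℝ →ₗ[ℝ] ℝ :=
  (fderiv ℝ (fun A : Matrix (Fin n) (Fin n) ℝ => Real.log (pivot A q)) B0).toLinearMap

/-- Delta method for the log-pivots: Hadamard-type differentiability along the moving direction `S`
with step `1 / s` and normalisation `t ∼ ρ s`. -/
theorem tendsto_log_pivot_sub {B0 : Matrix (Fin n) (Fin n) ℝ} (hB0 : B0.PosDef)
    {S : α → Matrix (Fin n) (Fin n) ℝ} {S0 : Matrix (Fin n) (Fin n) ℝ} (hS : Tendsto S l (𝓝 S0))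
    {s t : α → ℝ} {ρ : ℝ} (hs : Tendsto s l atTop) (hts : Tendsto (fun p => t p / s p) l (𝓝 ρ))
    (q : Fin n) :
    Tendsto (fun p => t p * (Real.log (pivot (B0 + (s p)⁻¹ • S p) q) - Real.log (pivot B0 q))) l
      (𝓝 (dlogPivot B0 q (ρ • S0))) := by
  have hd := ((contDiffAt_log_pivot hB0 q).differentiableAt one_ne_zero).hasFDerivAt
  have h0 : Tendsto (fun p => (s p)⁻¹ • S p) l (𝓝 0) := by
    simpa using (tendsto_inv_atTop_zero.comp hs).smul hS
  refine (hd.hasFDerivWithinAt (s := Set.univ)).lim (c := t) h0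
    (Eventually.of_forall fun _ => Set.mem_univ _) ?_
  refine (hts.smul hS).congr fun p => ?_
  rw [smul_smul, div_eq_mul_inv]

end

/-- Delta method for one scale: the eigenvalue error `O(a ^ (-γ))` is negligible at the rate `t`,
so the log-eigenvalues inherit the first-order behaviour of the log-pivots. -/
theorem tendsto_log_eigR [l.NeBot] (hmono : StrictMono h) (hgap : ∀ i k, i < k → γ ≤ h k - h i)
    (hγ : 0 < γ) (ha : Tendsto a l atTop) {P : Matrix (Fin n) (Fin n) ℝ} (hP : IsUnit P)
    {B0 : Matrix (Fin n) (Fin n) ℝ} (hB0 : B0.PosDef)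
    {S : α → Matrix (Fin n) (Fin n) ℝ} {S0 : Matrix (Fin n) (Fin n) ℝ} (hS : Tendsto S l (𝓝 S0))
    (hSs : ∀ p, (S p).IsSymm)
    {s t : α → ℝ} {ρ : ℝ} (hs : Tendsto s l atTop) (hts : Tendsto (fun p => t p / s p) l (𝓝 ρ))
    (hta : Tendsto (fun p => t p * a p ^ (-γ)) l (𝓝 0)) (q : Fin n) :
    Tendsto (fun p => t p *
      (Real.log (eigR (P * Dmat h (a p) * (B0 + (s p)⁻¹ • S p) * Dmat h (a p) * Pᵀ) q) -
        (2 * h q * Real.log (a p) + Real.log (pivot B0 q) + Real.log (pivot (Pᵀ * P) q)))) l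
      (𝓝 (dlogPivot B0 q (ρ • S0))) := by
  have hM : Tendsto (fun p => B0 + (s p)⁻¹ • S p) l (𝓝 B0) := by
    simpa using ((tendsto_inv_atTop_zero.comp hs).smul hS).const_add B0
  have hpd := eventually_posDef hB0 hM fun p => by
    have h1 : (S p)ᴴ = S p := by rw [conjTranspose_eq_transpose_of_trivial]; exact hSs p
    rw [IsHermitian, conjTranspose_add, conjTranspose_smul, h1, hB0.1.eq, star_trivial]
  have h1 := ((isBigO_refl t l).mul
    (isBigO_log_eigR hmono hgap hγ ha hP hB0 hM hpd q)).trans_tendsto hta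
  have h2 := h1.add (tendsto_log_pivot_sub hB0 hS hs hts q)
  rw [zero_add] at h2
  exact h2.congr fun p => by ring

end DeltaMethod

/-! ### Rates, vectorisation and the regression weights -/

section Rates

variable {a : ℕ → ℝ} {γ : ℝ}

theorem tendsto_scale_atTop (ha_pos : ∀ ν, 0 < a ν) (hγ : 0 < γ)
    (ha₂ : Tendsto (fun ν : ℕ => (ν : ℝ) / a ν ^ (1 + 2 * γ)) atTop (𝓝 0)) :
    Tendsto a atTop atTop := by
  have hpow : Tendsto (fun ν => a ν ^ (1 + 2 * γ)) atTop atTop := by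
    refine tendsto_atTop_mono' _ ?_ tendsto_natCast_atTop_atTop
    filter_upwards [ha₂.eventually (gt_mem_nhds one_pos)] with ν hν
    have h1 := Real.rpow_pos_of_pos (ha_pos ν) (1 + 2 * γ)
    rw [div_lt_one h1] at hν
    exact hν.le
  refine ((tendsto_rpow_atTop (y := (1 + 2 * γ)⁻¹) (by positivity)).comp hpow).congr fun ν => ?_
  exact Real.rpow_rpow_inv (ha_pos ν).le (by positivity)

theorem tendsto_ratio_atTop (ha_pos : ∀ ν, 0 < a ν)
    (ha₁ : Tendsto (fun ν : ℕ => a ν / (ν : ℝ)) atTop (𝓝 0)) :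
    Tendsto (fun ν : ℕ => (ν : ℝ) / a ν) atTop atTop := by
  have h1 : Tendsto (fun ν : ℕ => a ν / (ν : ℝ)) atTop (𝓝[>] 0) := by
    rw [tendsto_nhdsWithin_iff]
    refine ⟨ha₁, ?_⟩
    filter_upwards [eventually_gt_atTop 0] with ν hν
    exact div_pos (ha_pos ν) (by exact_mod_cast hν)
  exact h1.inv_tendsto_nhdsGT_zero.congr fun ν => inv_div _ _

theorem tendsto_rate_mul (ha_pos : ∀ ν, 0 < a ν)
    (ha₂ : Tendsto (fun ν : ℕ => (ν : ℝ) / a ν ^ (1 + 2 * γ)) atTop (𝓝 0)) :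
    Tendsto (fun ν : ℕ => Real.sqrt ((ν : ℝ) / a ν) * a ν ^ (-γ)) atTop (𝓝 0) := by
  have h1 := (Real.continuous_sqrt.tendsto 0).comp ha₂
  rw [Real.sqrt_zero] at h1
  refine h1.congr fun ν => ?_
  have hp := ha_pos ν
  have h2 : a ν ^ (1 + 2 * γ) = a ν * (a ν ^ γ) ^ 2 := by
    rw [Real.rpow_add hp, Real.rpow_one, mul_comm 2 γ, Real.rpow_mul hp.le]
    norm_num
  have h3 := Real.rpow_pos_of_pos hp γ
  change Real.sqrt ((ν : ℝ) / a ν ^ (1 + 2 * γ)) = _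
  rw [h2, ← div_div, Real.sqrt_div' _ (by positivity), Real.sqrt_sq h3.le, Real.rpow_neg hp.le,
    div_eq_mul_inv]

theorem tendsto_sqrt_atTop_div {c : ℝ} (hc : 0 < c)
    (hr : Tendsto (fun ν : ℕ => (ν : ℝ) / a ν) atTop atTop) :
    Tendsto (fun ν : ℕ => Real.sqrt ((ν : ℝ) / (a ν * c))) atTop atTop := by
  refine Real.tendsto_sqrt_atTop.comp ((hr.atTop_div_const hc).congr fun ν => ?_)
  rw [div_div]

theorem tendsto_sqrt_ratio {c : ℝ} (hc : 0 < c)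
    (hr : Tendsto (fun ν : ℕ => (ν : ℝ) / a ν) atTop atTop) :
    Tendsto (fun ν : ℕ => Real.sqrt ((ν : ℝ) / a ν) / Real.sqrt ((ν : ℝ) / (a ν * c))) atTop
      (𝓝 (Real.sqrt c)) := by
  refine tendsto_const_nhds.congr' ?_
  filter_upwards [hr.eventually_gt_atTop 0] with ν hν
  have h1 := Real.sqrt_pos.2 hν
  have h2 := Real.sqrt_pos.2 hc
  rw [← div_div (ν : ℝ), Real.sqrt_div' _ hc.le]
  field_simp

end Rates

section Assembly

variable {n : ℕ} {J : Type*}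

/-- The symmetric matrix at scale `j` whose upper-triangular entries are the `j`-block of the
stacked vector `z`; this inverts `vec_S`, linearly in `z`. -/
def unvec (j : J) :
    (J × {p : Fin n × Fin n // p.1 ≤ p.2} → ℝ) →ₗ[ℝ] Matrix (Fin n) (Fin n) ℝ where
  toFun z := Matrix.of fun i k => z (j, ⟨(min i k, max i k), min_le_max⟩)
  map_add' _ _ := rfl
  map_smul' _ _ := rfl

theorem unvec_apply (j : J) (z : J × {p : Fin n × Fin n // p.1 ≤ p.2} → ℝ) (i k : Fin n) :
    unvec j z i k = z (j, ⟨(min i k, max i k), min_le_max⟩) := rfl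

theorem unvec_isSymm (j : J) (z : J × {p : Fin n × Fin n // p.1 ≤ p.2} → ℝ) :
    (unvec j z).IsSymm := by
  ext i k
  simp only [transpose_apply, unvec_apply, min_comm, max_comm]

theorem unvec_vec (j : J) {S : J → Matrix (Fin n) (Fin n) ℝ} (hS : (S j).IsSymm) :
    unvec j (fun x => S x.1 x.2.1.1 x.2.1.2) = S j := by
  ext i k
  rw [unvec_apply]
  rcases le_total i k with hik | hik
  · simp only [min_eq_left hik, max_eq_right hik]
  · simp only [min_eq_right hik, max_eq_left hik]
    exact hS.apply i k

theorem continuous_unvec (j : J) : Continuous fun z => unvec (n := n) j z :=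
  continuous_pi fun _ => continuous_pi fun _ => continuous_apply _

theorem posDef_Emat_conj (h : Fin n → ℝ) (j : ℤ) {B : Matrix (Fin n) (Fin n) ℝ} (hB : B.PosDef) :
    (Emat h j * B * Emat h j).PosDef :=
  posDef_diagonal_conj hB fun _ => by positivity

theorem log_pivot_Emat_conj (h : Fin n → ℝ) (j : ℤ) {B : Matrix (Fin n) (Fin n) ℝ} (hB : B.PosDef)
    (q : Fin n) :
    Real.log (pivot (Emat h j * B * Emat h j) q) =
      2 * j * h q * Real.log 2 + Real.log (pivot B q) := by
  have he : ∀ i, 0 < (2 : ℝ) ^ ((j : ℝ) * h i) := fun _ => by positivity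
  rw [Emat, pivot_diagonal hB he, Real.log_mul (by positivity) (pivot_pos hB q).ne', Real.log_pow,
    Real.log_rpow two_pos]
  push_cast
  ring

/-- The conditions on the weights cancel the terms common to all scales and extract `θ`. -/
theorem regression_identity {ι : Type*} {s : Finset ι} {k w : ι → ℝ} (hw0 : ∑ j ∈ s, w j = 0)
    (hw1 : ∑ j ∈ s, k j * w j = 1) (t θ c : ℝ) (x : ι → ℝ) :
    t * (1 / 2 * ∑ j ∈ s, w j * Real.logb 2 (x j) - θ) =
      ∑ j ∈ s, w j / (2 * Real.log 2) *
        (t * (Real.log (x j) - (c + 2 * k j * θ * Real.log 2))) := by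
  have hl : Real.log 2 ≠ 0 := (Real.log_pos one_lt_two).ne'
  have h1 : ∀ j ∈ s, w j / (2 * Real.log 2) *
      (t * (Real.log (x j) - (c + 2 * k j * θ * Real.log 2))) =
      t / 2 * (w j * Real.logb 2 (x j)) - t * c / (2 * Real.log 2) * w j - t * θ * (k j * w j) := by
    intro j _
    rw [Real.logb]
    field_simp
    ring
  rw [Finset.sum_congr rfl h1, Finset.sum_sub_distrib, Finset.sum_sub_distrib, ← Finset.mul_sum,
    ← Finset.mul_sum, ← Finset.mul_sum, hw0, hw1]
  ring

end Assembly

/-- Corollary 3.1(ii), asymptotic normality of the wavelet eigenvalue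
regression estimator: under the asymptotic normality of the fixed-scale sample wavelet
variance and the rate conditions `a_ν/ν → 0`, `ν/a_ν^{1+2γ} → 0`, the vector
`√(ν/a_ν) (ĥ_q − h_q)_{q=1,…,n}`, with `ĥ_q := (1/2) Σ_j w_j log₂ λ_q(W_ν(j))`, converges in
distribution to a centered `n`-variate Gaussian. -/
theorem stmt13 {n : ℕ} (hn : 2 ≤ n)
    {Ω : Type*} [MeasurableSpace Ω] (μ : Measure Ω) [IsProbabilityMeasure μ]
    (h : Fin n → ℝ) (hmono : StrictMono h)
    (h0 : ∀ i, 0 < h i) (h1 : ∀ i, h i < 1)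
    (P : Matrix (Fin n) (Fin n) ℝ) (hP : IsUnit P)
    (hPcol : ∀ j, ∑ i, P i j ^ 2 = 1)
    (j₁ j₂ : ℤ) (hj : j₁ ≤ j₂)
    (w : ℤ → ℝ)
    (hw0 : ∑ j ∈ Finset.Icc j₁ j₂, w j = 0)
    (hw1 : ∑ j ∈ Finset.Icc j₁ j₂, (j : ℝ) * w j = 1)
    (B : Matrix (Fin n) (Fin n) ℝ) (hB : B.PosDef)
    (γ : ℝ)
    (hγ : IsLeast {d : ℝ | ∃ q₁ q₂ : Fin n, q₁ < q₂ ∧ d = h q₂ - h q₁} γ)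
    (a : ℕ → ℝ) (ha_pos : ∀ ν, 0 < a ν)
    (ha₁ : Tendsto (fun ν : ℕ => a ν / (ν : ℝ)) atTop (𝓝 0))
    (ha₂ : Tendsto (fun ν : ℕ => (ν : ℝ) / a ν ^ (1 + 2 * γ)) atTop (𝓝 0))
    (Bhat : ℕ → ℤ → Ω → Matrix (Fin n) (Fin n) ℝ)
    (hBhat_meas : ∀ ν j (i i' : Fin n), Measurable fun ω => Bhat ν j ω i i')
    (hBhat_symm : ∀ ν j ω, (Bhat ν j ω).IsSymm)
    (hBhat_pd : ∀ ν j, ∀ᵐ ω ∂μ, (Bhat ν j ω).PosDef)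
    (hCLT : ∃ (μG : Measure ((↑(Finset.Icc j₁ j₂) × {p : Fin n × Fin n // p.1 ≤ p.2}) → ℝ))
      (C : Matrix (↑(Finset.Icc j₁ j₂) × {p : Fin n × Fin n // p.1 ≤ p.2})
        (↑(Finset.Icc j₁ j₂) × {p : Fin n × Fin n // p.1 ≤ p.2}) ℝ),
      C.PosDef ∧ IsCenteredGaussian μG C ∧
      TendstoInDistribution μ
        (fun ν ω x =>
          Real.sqrt ((ν : ℝ) / (a ν * 2 ^ (x.1 : ℤ))) *
            (Bhat ν (x.1 : ℤ) ω (x.2 : Fin n × Fin n).1 (x.2 : Fin n × Fin n).2 -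
              (Emat h (x.1 : ℤ) * B * Emat h (x.1 : ℤ))
                (x.2 : Fin n × Fin n).1 (x.2 : Fin n × Fin n).2))
        μG) :
    ∃ (μG' : Measure ((Fin n) → ℝ)) (C' : Matrix (Fin n) (Fin n) ℝ),
      IsCenteredGaussian μG' C' ∧
      TendstoInDistribution μ
        (fun ν ω q =>
          Real.sqrt ((ν : ℝ) / a ν) *
            ((1 : ℝ) / 2 * ∑ j ∈ Finset.Icc j₁ j₂, w j *
              Real.logb 2
                (eigR (P * Dmat h (a ν) * Bhat ν j ω * Dmat h (a ν) * Pᵀ) q) - h q))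
        μG' := by
  obtain ⟨μG, C, -, hG, hconv⟩ := hCLT
  have hgap : ∀ i k, i < k → γ ≤ h k - h i := fun i k hik => hγ.2 ⟨i, k, hik, rfl⟩
  have hγ0 : 0 < γ := by
    obtain ⟨i, k, hik, hd⟩ := hγ.1
    rw [hd]
    exact sub_pos.2 (hmono hik)
  have ha := tendsto_scale_atTop ha_pos hγ0 ha₂
  have hr := tendsto_ratio_atTop ha_pos ha₁
  have hta := tendsto_rate_mul ha_pos ha₂
  have h2pos : ∀ j : ℤ, (0 : ℝ) < 2 ^ j := fun j => by positivity
  let s : ℕ → ℤ → ℝ := fun ν j => Real.sqrt ((ν : ℝ) / (a ν * 2 ^ j))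
  let Bj : ℤ → Matrix (Fin n) (Fin n) ℝ := fun j => Emat h j * B * Emat h j
  have hBj : ∀ j, (Bj j).PosDef := fun j => posDef_Emat_conj h j hB
  -- The recentred estimator as a deterministic function `g ν` of the stacked vector, and its
  -- continuous-convergence limit `L`.
  let W : ℕ → (↑(Finset.Icc j₁ j₂) × {p : Fin n × Fin n // p.1 ≤ p.2} → ℝ) →
      ↑(Finset.Icc j₁ j₂) → Matrix (Fin n) (Fin n) ℝ := fun ν z j =>
    P * Dmat h (a ν) * (Bj j + (s ν j)⁻¹ • unvec j z) * Dmat h (a ν) * Pᵀ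
  let g : ℕ → (↑(Finset.Icc j₁ j₂) × {p : Fin n × Fin n // p.1 ≤ p.2} → ℝ) → Fin n → ℝ :=
    fun ν z q => Real.sqrt ((ν : ℝ) / a ν) *
      ((1 : ℝ) / 2 * ∑ j : ↑(Finset.Icc j₁ j₂), w j * Real.logb 2 (eigR (W ν z j) q) - h q)
  let L : (↑(Finset.Icc j₁ j₂) × {p : Fin n × Fin n // p.1 ≤ p.2} → ℝ) →ₗ[ℝ] (Fin n → ℝ) :=
    LinearMap.pi fun q => ∑ j : ↑(Finset.Icc j₁ j₂), (w j / (2 * Real.log 2)) •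
      (dlogPivot (Bj j) q).comp (Real.sqrt ((2 : ℝ) ^ (j : ℤ)) • unvec j)
  have hLcont : Continuous L := L.continuous_of_finiteDimensional
  have hWherm : ∀ ν z j, (W ν z j).IsHermitian := by
    intro ν z j
    have hN : (Bj j + (s ν j)⁻¹ • unvec j z).IsHermitian := by
      have h1 : (unvec (n := n) j z)ᴴ = unvec j z := by
        rw [conjTranspose_eq_transpose_of_trivial]
        exact unvec_isSymm j z
      rw [IsHermitian, conjTranspose_add, conjTranspose_smul, h1, (hBj j).1.eq, star_trivial]
    have h1 := isHermitian_mul_mul_conjTranspose P (isHermitian_Dmat_conj h (a ν) hN)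
    rw [conjTranspose_eq_transpose_of_trivial] at h1
    simpa only [W, Matrix.mul_assoc] using h1
  have hgmeas : ∀ ν, Measurable (g ν) := by
    intro ν
    refine measurable_pi_lambda _ fun q => ?_
    have hW : ∀ j, Measurable fun z => eigR (W ν z j) q := fun j => by
      refine measurable_eigR (fun z => W ν z j) (fun i k => ?_) (fun z => hWherm ν z j) q
      have h1 : Continuous fun z => Bj j + (s ν j)⁻¹ • unvec j z :=
        ((continuous_unvec j).const_smul (s ν j)⁻¹).const_add (Bj j)
      have h2 := (continuous_const (y := P * Dmat h (a ν))).matrix_mul h1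
      have hc : Continuous fun z => W ν z j :=
        (h2.matrix_mul (continuous_const (y := Dmat h (a ν)))).matrix_mul
          (continuous_const (y := Pᵀ))
      exact (hc.matrix_elem i k).measurable
    have hlog : Measurable (Real.logb 2) := Real.measurable_log.div_const _
    exact ((Finset.measurable_sum _ fun j _ =>
      (hlog.comp (hW j)).const_mul _).const_mul _ |>.sub_const _).const_mul _
  have hw0' : ∑ j : ↑(Finset.Icc j₁ j₂), w j = 0 := (Finset.sum_coe_sort _ w).trans hw0
  have hw1' : ∑ j : ↑(Finset.Icc j₁ j₂), ((j : ℤ) : ℝ) * w j = 1 :=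
    (Finset.sum_coe_sort _ fun j : ℤ => (j : ℝ) * w j).trans hw1
  have hlim : ∀ z, Tendsto (fun p : ℕ × _ => g p.1 p.2) (atTop ×ˢ 𝓝 z) (𝓝 (L z)) := by
    intro z
    rw [tendsto_pi_nhds]
    intro q
    have hone : ∀ j : ↑(Finset.Icc j₁ j₂), _ := fun j =>
      tendsto_log_eigR (l := (atTop : Filter ℕ) ×ˢ 𝓝 z) hmono hgap hγ0 (ha.comp tendsto_fst) hP
        (hBj j) (((continuous_unvec j).tendsto z).comp tendsto_snd)
        (fun p => unvec_isSymm j p.2)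
        ((tendsto_sqrt_atTop_div (h2pos j) hr).comp tendsto_fst)
        ((tendsto_sqrt_ratio (h2pos j) hr).comp tendsto_fst) (hta.comp tendsto_fst) q
    have hall := tendsto_finsetSum Finset.univ fun j _ =>
      (hone j).const_mul (w j / (2 * Real.log 2))
    have hLz : L z q = ∑ j : ↑(Finset.Icc j₁ j₂), w j / (2 * Real.log 2) *
        dlogPivot (Bj j) q (Real.sqrt ((2 : ℝ) ^ (j : ℤ)) • unvec j z) := by
      simp [L]
    rw [hLz]
    refine hall.congr fun p => ?_
    have hid := regression_identity hw0' hw1' (Real.sqrt ((p.1 : ℝ) / a p.1)) (h q)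
      (2 * h q * Real.log (a p.1) + Real.log (pivot B q) + Real.log (pivot (Pᵀ * P) q))
      (fun j => eigR (W p.1 p.2 j) q)
    refine Eq.trans ?_ hid.symm
    refine Finset.sum_congr rfl fun j _ => ?_
    have h1 : Real.log (pivot (Bj j) q) = _ := log_pivot_Emat_conj h j hB q
    simp only [Function.comp_apply, h1, W, s]
    ring
  refine ⟨μG.map fun z => LinearMap.toMatrix' L *ᵥ z, _, isCenteredGaussian_map hG _, ?_⟩
  have := hG.1
  have hLeq : (fun z => LinearMap.toMatrix' L *ᵥ z) = L := by
    funext z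
    exact LinearMap.toMatrix'_mulVec L z
  rw [hLeq]
  refine tendstoInDistribution_comp μ ?_ hconv hgmeas hLcont hlim ?_ hLcont.measurable
  · intro ν
    exact measurable_pi_lambda _ fun x => ((hBhat_meas ν _ _ _).sub_const _).const_mul _
  · filter_upwards [hr.eventually_gt_atTop 0] with ν hν ω
    -- `√K_{ν,j} > 0` once `ν > 0`, so the matrices are recovered from the stacked vector.
    have hs : ∀ j, s ν j ≠ 0 := fun j => by
      refine (Real.sqrt_pos.2 ?_).ne'
      rw [← div_div]
      exact div_pos hν (h2pos j)
    have hrec : ∀ j : ↑(Finset.Icc j₁ j₂), Bj j + (s ν j)⁻¹ • unvec j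
        (fun x : ↑(Finset.Icc j₁ j₂) × {p : Fin n × Fin n // p.1 ≤ p.2} =>
          s ν x.1 * (Bhat ν x.1 ω x.2.1.1 x.2.1.2 - Bj x.1 x.2.1.1 x.2.1.2)) = Bhat ν j ω := by
      intro j
      have hBs : (Bj j).IsSymm := by
        have := (hBj j).1.eq
        rwa [conjTranspose_eq_transpose_of_trivial] at this
      have h1 : unvec j (fun x : ↑(Finset.Icc j₁ j₂) × {p : Fin n × Fin n // p.1 ≤ p.2} =>
          s ν x.1 * (Bhat ν x.1 ω x.2.1.1 x.2.1.2 - Bj x.1 x.2.1.1 x.2.1.2)) =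
          s ν j • (Bhat ν j ω - Bj j) :=
        unvec_vec j (S := fun j : ↑(Finset.Icc j₁ j₂) => s ν j • (Bhat ν j ω - Bj j))
          (((hBhat_symm ν j ω).sub hBs).smul _)
      rw [h1, smul_smul, inv_mul_cancel₀ (hs j), one_smul, add_sub_cancel]
    funext q
    simp only [g, W]
    rw [← Finset.sum_coe_sort (Finset.Icc j₁ j₂)]
    congr 3
    refine Finset.sum_congr rfl fun j _ => ?_
    rw [← hrec j]
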